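/- arXiv:2311.07267 — 5 statements merged into one kernel-verified Lean document; each statement's English description precedes it below -/
import Mathlib

section
/- Let ρ ≥ 0 and let f_k (k ∈ ℕ) and f be proper lower semicontinuous functions from ℝⁿ to ℝ ∪ {+∞} such that the functions f_k + (ρ/2)‖·‖² and f + (ρ/2)‖·‖² are convex and nonnegative. Then the following are equivalent: (i) f_k epi-converges to f, i.e., for every x ∈ ℝⁿ one has liminf_{k→∞} f_k(x_k) ≥ f(x) for every sequence x_k → x, and limsup_{k→∞} f_k(x_k) ≤ f(x) for some sequence x_k → x; (ii) there exists τ > 0 with τρ < 1 such that the Moreau envelopes converge pointwise: env_{τ f_k}(z) → env_{τ f}(z) for every z ∈ ℝⁿ. -/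
open Filter Topology

/-- The Moreau envelope with parameter `τ` of an extended-real-valued function. -/
noncomputable def moreauEnv {n : ℕ} (τ : ℝ) (f : EuclideanSpace ℝ (Fin n) → EReal)
    (z : EuclideanSpace ℝ (Fin n)) : EReal :=
  ⨅ y : EuclideanSpace ℝ (Fin n), f y + ((‖y - z‖ ^ 2 / (2 * τ) : ℝ) : EReal)

section Core

variable {E : Type*} [NormedAddCommGroup E] [InnerProductSpace ℝ E] 

noncomputable def FF (b : ℝ) (w : E) (p : E × ℝ) : ℝ := p.2 + b / 2 * ‖p.1 - w‖ ^ 2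

noncomputable def mm (b : ℝ) (C : Set (E × ℝ)) (w : E) : ℝ := sInf (FF b w '' C)

lemma FF_cont (b : ℝ) (w : E) : Continuous (FF b w) := by
  unfold FF; fun_prop

structure Good (C : Set (E × ℝ)) : Prop where
  closed : IsClosed C
  conv : Convex ℝ C
  nonempty : C.Nonempty
  nonneg : ∀ p ∈ C, 0 ≤ p.2
  up : ∀ x s t, (x, s) ∈ C → s ≤ t → (x, t) ∈ C

def PK1 (Ck : ℕ → Set (E × ℝ)) (C : Set (E × ℝ)) : Prop :=
  ∀ (φ : ℕ → ℕ) (u : ℕ → E × ℝ) (p : E × ℝ), StrictMono φ → (∀ n, u n ∈ Ck (φ n)) →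
    Tendsto u atTop (𝓝 p) → p ∈ C

def PK2 (Ck : ℕ → Set (E × ℝ)) (C : Set (E × ℝ)) : Prop :=
  ∀ p ∈ C, ∀ ε > 0, ∀ᶠ k in atTop, ∃ q ∈ Ck k, dist q p < ε

lemma mm_le {C : Set (E × ℝ)} (hC : Good C) {b : ℝ} (hb : 0 < b) (w : E) {p : E × ℝ}
    (hp : p ∈ C) : mm b C w ≤ FF b w p := by
  refine csInf_le ⟨0, ?_⟩ ⟨p, hp, rfl⟩
  rintro _ ⟨q, hq, rfl⟩
  have := hC.nonneg q hq
  unfold FF; positivity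

lemma le_mm {C : Set (E × ℝ)} (hC : Good C) {b : ℝ} (w : E) {r : ℝ}
    (h : ∀ p ∈ C, r ≤ FF b w p) : r ≤ mm b C w := by
  refine le_csInf (hC.nonempty.image _) ?_
  rintro _ ⟨q, hq, rfl⟩
  exact h q hq

lemma exists_lt_of_mm_lt {C : Set (E × ℝ)} (hC : Good C) {b : ℝ} (w : E) {r : ℝ}
    (h : mm b C w < r) : ∃ p ∈ C, FF b w p < r := by
  obtain ⟨_, ⟨p, hp, rfl⟩, h2⟩ := exists_lt_of_csInf_lt (hC.nonempty.image _) h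
  exact ⟨p, hp, h2⟩

lemma compact_sub [FiniteDimensional ℝ E] {b : ℝ} (hb : 0 < b) (w : E) (M : ℝ) :
    IsCompact {p : E × ℝ | 0 ≤ p.2 ∧ FF b w p ≤ M} := by
  haveI : ProperSpace E := FiniteDimensional.proper ℝ E
  refine IsCompact.of_isClosed_subset
    ((isCompact_closedBall w (1 + 2 * M / b)).prod (isCompact_Icc (a := (0:ℝ)) (b := M))) ?_ ?_
  · exact (isClosed_le continuous_const continuous_snd).inter
      (isClosed_le (FF_cont b w) continuous_const)
  · rintro ⟨y, s⟩ ⟨h0, h1⟩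
    simp only [FF] at h0 h1
    have h3 : 0 ≤ b / 2 * ‖y - w‖ ^ 2 := by positivity
    refine ⟨?_, h0, by linarith⟩
    rw [Metric.mem_closedBall, dist_eq_norm]
    have h4 : ‖y - w‖ ^ 2 ≤ 2 * M / b := by
      rw [le_div_iff₀ hb]; nlinarith
    nlinarith [sq_nonneg (‖y - w‖ - 1)]

lemma prox [FiniteDimensional ℝ E] {C : Set (E × ℝ)} (hC : Good C) {b : ℝ} (hb : 0 < b) (x : E) :
    ∃ p ∈ C, (∀ q ∈ C, FF b x p ≤ FF b x q) ∧
      ∀ q ∈ C, p.2 + inner ℝ (b • (x - p.1)) (q.1 - p.1) ≤ q.2 := by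
  obtain ⟨q0, hq0⟩ := hC.nonempty
  have hK := (compact_sub hb x (FF b x q0)).inter_right hC.closed
  obtain ⟨p, hp, hmin⟩ := hK.exists_isMinOn ⟨q0, ⟨hC.nonneg _ hq0, le_rfl⟩, hq0⟩
    (FF_cont b x).continuousOn
  have hm : ∀ q ∈ C, FF b x p ≤ FF b x q := by
    intro q hq
    by_cases h : FF b x q ≤ FF b x q0
    · exact hmin ⟨⟨hC.nonneg _ hq, h⟩, hq⟩
    · exact hp.1.2.trans (not_le.1 h).le
  refine ⟨p, hp.2, hm, fun q hq => ?_⟩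
  have key : ∀ t : ℝ, 0 < t → t ≤ 1 →
      0 ≤ (q.2 - p.2) - inner ℝ (b • (x - p.1)) (q.1 - p.1) + t * (b / 2 * ‖q.1 - p.1‖ ^ 2) := by
    intro t ht ht1
    have h1 : p + t • (q - p) ∈ C := hC.conv.add_smul_sub_mem hp.2 hq ⟨ht.le, ht1⟩
    have h2 := hm _ h1
    have h3 : ‖(p + t • (q - p)).1 - x‖ ^ 2 = ‖p.1 - x‖ ^ 2
        - 2 * t * inner ℝ (x - p.1) (q.1 - p.1) + t ^ 2 * ‖q.1 - p.1‖ ^ 2 := by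
      have : (p + t • (q - p)).1 - x = (p.1 - x) + t • (q.1 - p.1) := by
        simp; abel
      rw [this, norm_add_sq_real, norm_smul, inner_smul_right, mul_pow, Real.norm_eq_abs, sq_abs,
        ← neg_sub x p.1, inner_neg_left]
      ring
    simp only [FF] at h2
    rw [h3] at h2
    have h4 : (p + t • (q - p)).2 = p.2 + t * (q.2 - p.2) := by simp
    rw [h4] at h2
    rw [inner_smul_left]
    simp only [conj_trivial]
    have h5 : 0 ≤ t * ((q.2 - p.2) - b * inner ℝ (x - p.1) (q.1 - p.1)
        + t * (b / 2 * ‖q.1 - p.1‖ ^ 2)) := by nlinarith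
    exact nonneg_of_mul_nonneg_right h5 ht
  have hlim : Tendsto (fun t : ℝ => (q.2 - p.2) - inner ℝ (b • (x - p.1)) (q.1 - p.1)
      + t * (b / 2 * ‖q.1 - p.1‖ ^ 2)) (𝓝[>] 0)
      (𝓝 ((q.2 - p.2) - inner ℝ (b • (x - p.1)) (q.1 - p.1) + 0 * (b / 2 * ‖q.1 - p.1‖ ^ 2))) := by
    apply tendsto_nhdsWithin_of_tendsto_nhds
    apply Continuous.tendsto
    fun_prop
  have h0 := ge_of_tendsto hlim (by
    filter_upwards [Ioc_mem_nhdsGT (zero_lt_one (α := ℝ))] with t ht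
    exact key t ht.1 ht.2)
  linarith

lemma core1 [FiniteDimensional ℝ E] {Ck : ℕ → Set (E × ℝ)} {C : Set (E × ℝ)}
    (hk : ∀ k, Good (Ck k)) (hC : Good C) {c : ℝ} (hc : 0 < c)
    (h1 : PK1 Ck C) (h2 : PK2 Ck C) (w : E) :
    Tendsto (fun k => mm c (Ck k) w) atTop (𝓝 (mm c C w)) := by
  rw [tendsto_order]
  constructor
  · intro a ha
    by_contra hcon
    have hf : ∃ᶠ k in atTop, mm c (Ck k) w ≤ a := by
      simpa [Filter.Frequently] using hcon
    obtain ⟨r, har, hr⟩ := exists_between ha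
    obtain ⟨φ, hφ, hφ2⟩ := extraction_of_frequently_atTop hf
    have h3 : ∀ n, ∃ p ∈ Ck (φ n), FF c w p < r := fun n =>
      exists_lt_of_mm_lt (hk _) w ((hφ2 n).trans_lt har)
    choose u hu hur using h3
    obtain ⟨p, hp, ψ, hψ, hlim⟩ := (compact_sub hc w r).tendsto_subseq
      (x := u) (fun n => ⟨(hk _).nonneg _ (hu n), (hur n).le⟩)
    have := h1 (φ ∘ ψ) (u ∘ ψ) p (hφ.comp hψ) (fun n => hu _) hlim
    have := mm_le hC hc w this
    linarith [hp.2]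
  · intro a ha
    obtain ⟨p, hp, hpa⟩ := exists_lt_of_mm_lt hC w ha
    have : ∀ᶠ q in 𝓝 p, FF c w q < a := (FF_cont c w).tendsto p |>.eventually_lt_const hpa
    obtain ⟨ε, hε, hball⟩ := Metric.eventually_nhds_iff.1 this
    filter_upwards [h2 p hp ε hε] with k ⟨q, hq, hd⟩
    exact (mm_le (hk k) hc w hq).trans_lt (hball hd)

lemma FF_shift {c : ℝ} (hc : 0 < c) (x v : E) (q : E × ℝ) :
    FF c (x + c⁻¹ • v) q = q.2 - inner ℝ v (q.1 - x) + c / 2 * ‖q.1 - x‖ ^ 2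
      + ‖v‖ ^ 2 / (2 * c) := by
  have : q.1 - (x + c⁻¹ • v) = (q.1 - x) - c⁻¹ • v := by abel
  rw [FF, this, norm_sub_sq_real, norm_smul, inner_smul_right, mul_pow, Real.norm_eq_abs, sq_abs,
    real_inner_comm]
  field_simp
  ring

lemma core2 [FiniteDimensional ℝ E] {Ck : ℕ → Set (E × ℝ)} {C : Set (E × ℝ)}
    (hk : ∀ k, Good (Ck k)) (hC : Good C) {c : ℝ} (hc : 0 < c)
    (h : ∀ w, Tendsto (fun k => mm c (Ck k) w) atTop (𝓝 (mm c C w))) : PK1 Ck C := by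
  rintro φ u ⟨x, r⟩ hφ hu hlim
  by_contra hx
  obtain ⟨ε, hε, hball⟩ := Metric.isOpen_iff.1 hC.closed.isOpen_compl _ hx
  have hr : 0 ≤ r := by
    have : Tendsto (fun n => (u n).2) atTop (𝓝 r) := (continuous_snd.tendsto _).comp hlim
    exact ge_of_tendsto' this (fun n => (hk _).nonneg _ (hu n))
  set δ := ε / 2 with hδ
  have hδ0 : 0 < δ := by positivity
  have hnear : ∀ q ∈ C, dist q.1 x < ε → r + δ ≤ q.2 := by
    intro q hq hd
    by_contra hlt
    push Not at hlt
    have h1 : (q.1, r + δ) ∈ C := hC.up q.1 q.2 _ hq hlt.le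
    refine hball ?_ h1
    rw [Metric.mem_ball, Prod.dist_eq]
    refine max_lt hd ?_
    simp [Real.dist_eq, abs_of_pos hδ0]
    linarith
  set b := 2 * (r + δ) / ε ^ 2 with hb
  have hb0 : 0 < b := by positivity
  obtain ⟨p, hp, -, hsub⟩ := prox hC hb0 x
  set v := b • (x - p.1) with hv
  have hval : r + δ ≤ p.2 + inner ℝ v (x - p.1) := by
    have e : inner ℝ v (x - p.1) = b * ‖x - p.1‖ ^ 2 := by
      rw [hv, inner_smul_left, real_inner_self_eq_norm_sq]; simp
    rw [e]
    by_cases hd : dist p.1 x < ε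
    · have := hnear p hp hd
      have : 0 ≤ b * ‖x - p.1‖ ^ 2 := by positivity
      linarith
    · rw [dist_comm, dist_eq_norm, not_lt] at hd
      have h1 : ε ^ 2 ≤ ‖x - p.1‖ ^ 2 := by gcongr
      have h2 : b * ε ^ 2 = 2 * (r + δ) := by rw [hb]; field_simp
      have h3 := hC.nonneg p hp
      nlinarith
  have hm : r + δ + ‖v‖ ^ 2 / (2 * c) ≤ mm c C (x + c⁻¹ • v) := by
    refine le_mm hC _ fun q hq => ?_
    rw [FF_shift hc]
    have h1 := hsub q hq
    have h2 : q.1 - p.1 = (x - p.1) + (q.1 - x) := by abel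
    rw [h2, inner_add_right] at h1
    have : 0 ≤ c / 2 * ‖q.1 - x‖ ^ 2 := by positivity
    linarith
  have l1 := (h (x + c⁻¹ • v)).comp hφ.tendsto_atTop
  have l2 := ((FF_cont c (x + c⁻¹ • v)).tendsto _).comp hlim
  have := le_of_tendsto_of_tendsto' l1 l2 (fun n => mm_le (hk _) hc _ (hu n))
  rw [FF_shift hc] at this
  simp at this
  linarith

lemma core3 [FiniteDimensional ℝ E] {Ck : ℕ → Set (E × ℝ)} {C : Set (E × ℝ)}
    (hk : ∀ k, Good (Ck k)) (hC : Good C) {c : ℝ} (hc : 0 < c)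
    (h : ∀ w, Tendsto (fun k => mm c (Ck k) w) atTop (𝓝 (mm c C w))) : PK2 Ck C := by
  have hPK1 := core2 hk hC hc h
  rintro ⟨x, s⟩ hxs ε hε
  have hs : 0 ≤ s := hC.nonneg _ hxs
  set b := 2 * (s + 1) / (ε / 2) ^ 2 with hb
  have hb0 : 0 < b := by positivity
  obtain ⟨p, hp, hmin, hsub⟩ := prox hC hb0 x
  have h1 := hmin _ hxs
  have hp0 := hC.nonneg p hp
  simp only [FF, sub_self, norm_zero] at h1
  have hps : p.2 ≤ s := by
    have : 0 ≤ b / 2 * ‖p.1 - x‖ ^ 2 := by positivity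
    linarith
  have hpx : dist p.1 x < ε / 2 := by
    rw [dist_eq_norm]
    by_contra hlt
    push Not at hlt
    have h3 : (ε / 2) ^ 2 ≤ ‖p.1 - x‖ ^ 2 := by gcongr
    have h2 : b * (ε / 2) ^ 2 = 2 * (s + 1) := by rw [hb]; field_simp
    nlinarith
  set v := b • (x - p.1) with hv
  set w := p.1 + c⁻¹ • v with hw
  have hgrow : ∀ q ∈ C, FF c w p + c / 2 * ‖q.1 - p.1‖ ^ 2 ≤ FF c w q := by
    intro q hq
    rw [hw, FF_shift hc, FF_shift hc]
    have := hsub q hq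
    simp
    linarith
  have hmp : mm c C w = FF c w p := by
    refine le_antisymm (mm_le hC hc w hp) (le_mm hC w fun q hq => ?_)
    have := hgrow q hq
    have : 0 ≤ c / 2 * ‖q.1 - p.1‖ ^ 2 := by positivity
    linarith
  have hev : ∀ᶠ k in atTop, ∃ q ∈ Ck k, dist q p < ε / 2 := by
    by_contra hcon
    have hf : ∃ᶠ k in atTop, ∀ q ∈ Ck k, ε / 2 ≤ dist q p := by
      simpa [Filter.Frequently] using hcon
    obtain ⟨φ, hφ, hφ2⟩ := extraction_of_frequently_atTop hf
    have h3 : ∀ n, ∃ q ∈ Ck (φ n), FF c w q < mm c (Ck (φ n)) w + 1 / ((n : ℝ) + 1) := fun n =>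
      exists_lt_of_mm_lt (hk _) w (by have : 0 < 1 / ((n : ℝ) + 1) := by positivity
                                      linarith)
    choose u hu hur using h3
    have l1 : Tendsto (fun n => mm c (Ck (φ n)) w + 1 / ((n : ℝ) + 1)) atTop
        (𝓝 (mm c C w + 0)) :=
      ((h w).comp hφ.tendsto_atTop).add tendsto_one_div_add_atTop_nhds_zero_nat
    obtain ⟨M, hM⟩ := l1.bddAbove_range
    obtain ⟨q, -, ψ, hψ, hlim⟩ := (compact_sub hc w M).tendsto_subseq
      (x := u) (fun n => ⟨(hk _).nonneg _ (hu n), (hur n).le.trans (hM ⟨n, rfl⟩)⟩)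
    have hq := hPK1 (φ ∘ ψ) (u ∘ ψ) q (hφ.comp hψ) (fun n => hu _) hlim
    have h4 : FF c w q ≤ mm c C w + 0 :=
      le_of_tendsto_of_tendsto' (((FF_cont c w).tendsto _).comp hlim)
        (l1.comp hψ.tendsto_atTop) (fun n => (hur _).le)
    have h5 := hgrow q hq
    have h6 : c / 2 * ‖q.1 - p.1‖ ^ 2 ≤ 0 := by linarith
    have h7 : ‖q.1 - p.1‖ = 0 := by
      have : ‖q.1 - p.1‖ ^ 2 ≤ 0 := by
        by_contra h8
        push Not at h8
        have : 0 < c / 2 * ‖q.1 - p.1‖ ^ 2 := by positivity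
        linarith
      exact pow_eq_zero_iff two_ne_zero |>.1 (le_antisymm this (by positivity))
    have h8 : q.1 = p.1 := sub_eq_zero.1 (norm_eq_zero.1 h7)
    have h9 : q.2 = p.2 := by
      have e : FF c w q = FF c w p := by
        apply le_antisymm
        · linarith
        · have : 0 ≤ c / 2 * ‖q.1 - p.1‖ ^ 2 := by positivity
          linarith
      simp only [FF, h8] at e
      linarith
    have h10 : q = p := Prod.ext h8 h9
    subst h10
    have h11 : Tendsto (fun n => dist ((u ∘ ψ) n) q) atTop (𝓝 0) :=
      tendsto_iff_dist_tendsto_zero.1 hlim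
    have := ge_of_tendsto' h11 (fun n => hφ2 _ _ (hu _))
    linarith
  filter_upwards [hev] with k ⟨q, hq, hd⟩
  refine ⟨(q.1, q.2 + (s - p.2)), (hk k).up q.1 q.2 _ hq (by linarith), ?_⟩
  rw [Prod.dist_eq] at hd ⊢
  refine max_lt ?_ ?_
  · calc dist q.1 x ≤ dist q.1 p.1 + dist p.1 x := dist_triangle _ _ _
      _ < ε := by linarith [(le_max_left (dist q.1 p.1) (dist q.2 p.2))]
  · have e : dist (q.2 + (s - p.2)) s = dist q.2 p.2 := by
      simp only [Real.dist_eq]; congr 1; ring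
    change dist (q.2 + (s - p.2)) s < ε
    rw [e]
    linarith [(le_max_right (dist q.1 p.1) (dist q.2 p.2))]

end Core

section Conv

variable {n : ℕ}

def GG (ρ : ℝ) (f : EuclideanSpace ℝ (Fin n) → EReal) : Set (EuclideanSpace ℝ (Fin n) × ℝ) :=
  {p | f p.1 ≤ ((p.2 - ρ / 2 * ‖p.1‖ ^ 2 : ℝ) : EReal)}

lemma mem_GG {ρ : ℝ} {f : EuclideanSpace ℝ (Fin n) → EReal} {x : EuclideanSpace ℝ (Fin n)}
    {s : ℝ} : (x, s) ∈ GG ρ f ↔ f x ≤ ((s - ρ / 2 * ‖x‖ ^ 2 : ℝ) : EReal) := Iff.rfl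

lemma mem_GG' {ρ : ℝ} {f : EuclideanSpace ℝ (Fin n) → EReal} {x : EuclideanSpace ℝ (Fin n)}
    {s : ℝ} : (x, s) ∈ GG ρ f ↔ f x + ((ρ / 2 * ‖x‖ ^ 2 : ℝ) : EReal) ≤ (s : EReal) := by
  rw [mem_GG]
  constructor
  · intro h
    calc _ ≤ ((s - ρ / 2 * ‖x‖ ^ 2 : ℝ) : EReal) + ((ρ / 2 * ‖x‖ ^ 2 : ℝ) : EReal) := by gcongr
      _ = _ := by rw [← EReal.coe_add]; congr 1; ring
  · intro h
    rw [EReal.coe_sub]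
    exact (EReal.le_sub_iff_add_le (Or.inl (EReal.coe_ne_bot _)) (Or.inl (EReal.coe_ne_top _))).2 h

lemma good_GG {ρ : ℝ} {f : EuclideanSpace ℝ (Fin n) → EReal}
    (hfprop : ∃ x, f x ≠ ⊤) (hfbot : ∀ x, f x ≠ ⊥) (hflsc : LowerSemicontinuous f)
    (hfconv : ∀ x y : EuclideanSpace ℝ (Fin n), ∀ a b : ℝ, 0 ≤ a → 0 ≤ b → a + b = 1 →
      f (a • x + b • y) + ((ρ / 2 * ‖a • x + b • y‖ ^ 2 : ℝ) : EReal) ≤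
        (a : EReal) * (f x + ((ρ / 2 * ‖x‖ ^ 2 : ℝ) : EReal)) +
          (b : EReal) * (f y + ((ρ / 2 * ‖y‖ ^ 2 : ℝ) : EReal)))
    (hfnn : ∀ x, (0 : EReal) ≤ f x + ((ρ / 2 * ‖x‖ ^ 2 : ℝ) : EReal)) : Good (GG ρ f) where
  closed := by
    have h := hflsc.isClosed_epigraph
    have hc : Continuous (fun p : EuclideanSpace ℝ (Fin n) × ℝ =>
        (p.1, ((p.2 - ρ / 2 * ‖p.1‖ ^ 2 : ℝ) : EReal))) := by
      refine continuous_fst.prodMk (continuous_coe_real_ereal.comp ?_)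
      fun_prop
    exact h.preimage hc
  conv := by
    rintro ⟨x, s⟩ hx ⟨y, t⟩ hy a b ha hb hab
    rw [mem_GG'] at hx hy
    change (a • x + b • y, a * s + b * t) ∈ GG ρ f
    rw [mem_GG']
    refine (hfconv x y a b ha hb hab).trans ?_
    rw [EReal.coe_add, EReal.coe_mul, EReal.coe_mul]
    have ha' : (0 : EReal) ≤ a := by exact_mod_cast ha
    have hb' : (0 : EReal) ≤ b := by exact_mod_cast hb
    exact add_le_add (mul_le_mul_of_nonneg_left hx ha') (mul_le_mul_of_nonneg_left hy hb')
  nonempty := by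
    obtain ⟨x, hx⟩ := hfprop
    refine ⟨(x, (f x).toReal + ρ / 2 * ‖x‖ ^ 2), ?_⟩
    rw [mem_GG, add_sub_cancel_right, EReal.coe_toReal hx (hfbot x)]
  nonneg := by
    rintro ⟨x, s⟩ hx
    rw [mem_GG'] at hx
    exact_mod_cast (hfnn x).trans hx
  up := by
    intro x s t h hst
    rw [mem_GG'] at h ⊢
    exact h.trans (by exact_mod_cast hst)

lemma ident {ρ τ : ℝ} (hτ : 0 < τ) (h : τ * ρ < 1) (y w : EuclideanSpace ℝ (Fin n)) (s : ℝ) :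
    s - ρ / 2 * ‖y‖ ^ 2 + ‖y - (1 - τ * ρ) • w‖ ^ 2 / (2 * τ) =
      FF ((1 - τ * ρ) / τ) w (y, s) +
        (‖(1 - τ * ρ) • w‖ ^ 2 / (2 * τ) - (1 - τ * ρ) / τ / 2 * ‖w‖ ^ 2) := by
  simp only [FF]
  rw [norm_sub_sq_real, norm_sub_sq_real, norm_smul, inner_smul_right]
  field_simp
  ring

lemma env_eq {ρ τ : ℝ} (hτ : 0 < τ) (h : τ * ρ < 1) {f : EuclideanSpace ℝ (Fin n) → EReal}
    (hfbot : ∀ x, f x ≠ ⊥) (hG : Good (GG ρ f)) (w : EuclideanSpace ℝ (Fin n)) :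
    moreauEnv τ f ((1 - τ * ρ) • w) = ((mm ((1 - τ * ρ) / τ) (GG ρ f) w +
        (‖(1 - τ * ρ) • w‖ ^ 2 / (2 * τ) - (1 - τ * ρ) / τ / 2 * ‖w‖ ^ 2) : ℝ) : EReal) := by
  have hc : 0 < (1 - τ * ρ) / τ := div_pos (by linarith) hτ
  set K := ‖(1 - τ * ρ) • w‖ ^ 2 / (2 * τ) - (1 - τ * ρ) / τ / 2 * ‖w‖ ^ 2 with hK
  apply le_antisymm
  · by_contra hlt
    rw [not_le] at hlt
    obtain ⟨r, h1, h2⟩ := EReal.lt_iff_exists_real_btwn.1 hlt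
    have h1' : mm ((1 - τ * ρ) / τ) (GG ρ f) w < r - K := by
      have := EReal.coe_lt_coe_iff.1 h1
      linarith
    obtain ⟨⟨y, s⟩, hp, hlt⟩ := exists_lt_of_mm_lt hG w h1'
    rw [mem_GG] at hp
    refine absurd h2 (not_lt.2 ?_)
    refine (iInf_le _ y).trans ?_
    calc _ ≤ ((s - ρ / 2 * ‖y‖ ^ 2 : ℝ) : EReal)
          + ((‖y - (1 - τ * ρ) • w‖ ^ 2 / (2 * τ) : ℝ) : EReal) := by gcongr
      _ ≤ r := by
        rw [← EReal.coe_add, ident hτ h, ← hK, EReal.coe_le_coe_iff]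
        linarith
  · refine le_iInf fun y => ?_
    by_cases ht : f y = ⊤
    · rw [ht, EReal.top_add_coe]; exact le_top
    · have e : f y = ((f y).toReal : EReal) := (EReal.coe_toReal ht (hfbot y)).symm
      set a := (f y).toReal
      have hm : (y, a + ρ / 2 * ‖y‖ ^ 2) ∈ GG ρ f := by
        rw [mem_GG, add_sub_cancel_right, e]
      have := mm_le hG hc w hm
      have h2 := ident hτ h y w (a + ρ / 2 * ‖y‖ ^ 2)
      rw [e, ← EReal.coe_add, EReal.coe_le_coe_iff]
      rw [add_sub_cancel_right] at h2
      linarith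

lemma epi_to_PK1 {ρ : ℝ} {fk : ℕ → EuclideanSpace ℝ (Fin n) → EReal}
    {f : EuclideanSpace ℝ (Fin n) → EReal}
    (h : ∀ x, ∀ u : ℕ → EuclideanSpace ℝ (Fin n), Tendsto u atTop (𝓝 x) →
          f x ≤ liminf (fun k => fk k (u k)) atTop) :
    PK1 (fun k => GG ρ (fk k)) (GG ρ f) := by
  rintro φ u ⟨x, s⟩ hφ hu hlim
  have hl1 : Tendsto (fun n => (u n).1) atTop (𝓝 x) := (continuous_fst.tendsto _).comp hlim
  set v : ℕ → EuclideanSpace ℝ (Fin n) := Function.extend φ (fun n => (u n).1) (fun _ => x) with hv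
  have hvφ : ∀ n, v (φ n) = (u n).1 := fun n => hφ.injective.extend_apply _ _ _
  have hvlim : Tendsto v atTop (𝓝 x) := by
    rw [Metric.tendsto_atTop] at hl1 ⊢
    intro ε hε
    obtain ⟨N, hN⟩ := hl1 ε hε
    refine ⟨φ N, fun k hk => ?_⟩
    by_cases hex : ∃ m, φ m = k
    · obtain ⟨m, rfl⟩ := hex
      rw [hvφ]
      exact hN m (hφ.le_iff_le.1 hk)
    · rw [hv, Function.extend_apply' _ _ _ hex]; simpa using hε
  have h1 := h x v hvlim
  rw [mem_GG]
  by_contra hlt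
  rw [not_le] at hlt
  obtain ⟨r, hr1, hr2⟩ := EReal.lt_iff_exists_real_btwn.1 hlt
  have hcont : Continuous (fun p : EuclideanSpace ℝ (Fin n) × ℝ => p.2 - ρ / 2 * ‖p.1‖ ^ 2) := by
    fun_prop
  have hev : ∀ᶠ m in atTop, (u m).2 - ρ / 2 * ‖(u m).1‖ ^ 2 < r :=
    ((hcont.tendsto _).comp hlim).eventually_lt_const (EReal.coe_lt_coe_iff.1 hr1)
  have hfr : ∃ᶠ k in atTop, fk k (v k) ≤ r := by
    apply hφ.tendsto_atTop.frequently
    refine (hev.mono fun m hm => ?_).frequently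
    rw [hvφ]
    have h2 : fk (φ m) (u m).1 ≤ _ := hu m
    exact h2.trans (EReal.coe_le_coe_iff.2 hm.le)
  exact absurd (h1.trans (liminf_le_of_frequently_le' hfr)) (not_le.2 hr2)

lemma epi_to_PK2 {ρ : ℝ} {fk : ℕ → EuclideanSpace ℝ (Fin n) → EReal}
    {f : EuclideanSpace ℝ (Fin n) → EReal}
    (h : ∀ x, ∃ u : ℕ → EuclideanSpace ℝ (Fin n), Tendsto u atTop (𝓝 x) ∧
          limsup (fun k => fk k (u k)) atTop ≤ f x) :
    PK2 (fun k => GG ρ (fk k)) (GG ρ f) := by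
  rintro ⟨x, s⟩ hx ε hε
  obtain ⟨u, hu, hls⟩ := h x
  rw [mem_GG] at hx
  have h1 : limsup (fun k => fk k (u k)) atTop <
      ((s - ρ / 2 * ‖x‖ ^ 2 + ε / 2 : ℝ) : EReal) := by
    refine (hls.trans hx).trans_lt (EReal.coe_lt_coe_iff.2 (by linarith))
  have h2 := eventually_lt_of_limsup_lt h1
  have h3 : Tendsto (fun k => (u k, s + ε / 2 + ρ / 2 * ‖u k‖ ^ 2 - ρ / 2 * ‖x‖ ^ 2)) atTop
      (𝓝 (x, s + ε / 2 + ρ / 2 * ‖x‖ ^ 2 - ρ / 2 * ‖x‖ ^ 2)) := by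
    have : Continuous (fun y : EuclideanSpace ℝ (Fin n) =>
      (y, s + ε / 2 + ρ / 2 * ‖y‖ ^ 2 - ρ / 2 * ‖x‖ ^ 2)) := by fun_prop
    exact (this.tendsto x).comp hu
  rw [add_sub_cancel_right] at h3
  have h4 := (Metric.tendsto_nhds.1 h3) (ε / 2) (by positivity)
  filter_upwards [h2, h4] with k hk2 hk4
  refine ⟨(u k, s + ε / 2 + ρ / 2 * ‖u k‖ ^ 2 - ρ / 2 * ‖x‖ ^ 2), ?_, ?_⟩
  · rw [mem_GG]
    refine hk2.le.trans (EReal.coe_le_coe_iff.2 ?_)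
    linarith
  · refine (dist_triangle _ (x, s + ε / 2) _).trans_lt ?_
    have : dist (x, s + ε / 2) (x, s) = ε / 2 := by
      rw [Prod.dist_eq]
      simp [abs_of_pos hε]
      positivity
    linarith

lemma PK_to_epi1 {ρ : ℝ} {fk : ℕ → EuclideanSpace ℝ (Fin n) → EReal}
    {f : EuclideanSpace ℝ (Fin n) → EReal}
    (h : PK1 (fun k => GG ρ (fk k)) (GG ρ f)) (x : EuclideanSpace ℝ (Fin n))
    (u : ℕ → EuclideanSpace ℝ (Fin n)) (hu : Tendsto u atTop (𝓝 x)) :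
    f x ≤ liminf (fun k => fk k (u k)) atTop := by
  by_contra hlt
  rw [not_le] at hlt
  obtain ⟨r, hr1, hr2⟩ := EReal.lt_iff_exists_real_btwn.1 hlt
  obtain ⟨φ, hφ, hφ2⟩ := extraction_of_frequently_atTop (frequently_lt_of_liminf_lt (by isBoundedDefault) hr1)
  have : Continuous (fun y : EuclideanSpace ℝ (Fin n) => (y, r + ρ / 2 * ‖y‖ ^ 2)) := by fun_prop
  have h1 := h φ (fun m => (u (φ m), r + ρ / 2 * ‖u (φ m)‖ ^ 2)) (x, r + ρ / 2 * ‖x‖ ^ 2) hφ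
    (fun m => by
      rw [mem_GG, add_sub_cancel_right]
      exact (hφ2 m).le)
    ((this.tendsto x).comp (hu.comp hφ.tendsto_atTop))
  rw [mem_GG, add_sub_cancel_right] at h1
  exact absurd hr2 (not_lt.2 h1)

lemma PK_to_epi2 {ρ : ℝ} {fk : ℕ → EuclideanSpace ℝ (Fin n) → EReal}
    {f : EuclideanSpace ℝ (Fin n) → EReal} (hfbot : ∀ x, f x ≠ ⊥)
    (hk : ∀ k, Good (GG ρ (fk k)))
    (h : PK2 (fun k => GG ρ (fk k)) (GG ρ f)) (x : EuclideanSpace ℝ (Fin n)) :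
    ∃ u : ℕ → EuclideanSpace ℝ (Fin n), Tendsto u atTop (𝓝 x) ∧
          limsup (fun k => fk k (u k)) atTop ≤ f x := by
  by_cases ht : f x = ⊤
  · exact ⟨fun _ => x, tendsto_const_nhds, by rw [ht]; exact le_top⟩
  have e : f x = ((f x).toReal : EReal) := (EReal.coe_toReal ht (hfbot x)).symm
  set a := (f x).toReal
  set p : EuclideanSpace ℝ (Fin n) × ℝ := (x, a + ρ / 2 * ‖x‖ ^ 2) with hp
  have hm : p ∈ GG ρ f := by
    rw [hp, mem_GG, add_sub_cancel_right, e]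
  have h1 : ∀ k : ℕ, ∃ q ∈ GG ρ (fk k),
      dist p q < Metric.infDist p (GG ρ (fk k)) + 1 / ((k : ℝ) + 1) := fun k =>
    (Metric.infDist_lt_iff (hk k).nonempty).1 (by
      have : 0 < 1 / ((k : ℝ) + 1) := by positivity
      linarith)
  choose q hq hqd using h1
  have hd : Tendsto (fun k => Metric.infDist p (GG ρ (fk k))) atTop (𝓝 0) := by
    rw [Metric.tendsto_nhds]
    intro ε hε
    filter_upwards [h p hm ε hε] with k ⟨r, hr, hrd⟩
    rw [Real.dist_eq, sub_zero, abs_of_nonneg Metric.infDist_nonneg]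
    rw [dist_comm] at hrd
    exact (Metric.infDist_le_dist_of_mem hr).trans_lt hrd
  have hlim : Tendsto q atTop (𝓝 p) := by
    rw [tendsto_iff_dist_tendsto_zero]
    have := hd.add (tendsto_one_div_add_atTop_nhds_zero_nat (𝕜 := ℝ))
    rw [add_zero] at this
    refine squeeze_zero (fun _ => dist_nonneg) (fun k => ?_) this
    rw [dist_comm]
    exact (hqd k).le
  refine ⟨fun k => (q k).1, (continuous_fst.tendsto _).comp hlim, ?_⟩
  have hcont : Continuous (fun p : EuclideanSpace ℝ (Fin n) × ℝ =>
      ((p.2 - ρ / 2 * ‖p.1‖ ^ 2 : ℝ) : EReal)) :=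
    continuous_coe_real_ereal.comp (by fun_prop)
  have hl := ((hcont.tendsto p).comp hlim).limsup_eq
  calc limsup (fun k => fk k (q k).1) atTop ≤ _ := limsup_le_limsup (Eventually.of_forall hq)
    _ = _ := hl
    _ = f x := by rw [e, hp]; simp

end Conv

theorem stmt1 {n : ℕ} (ρ : ℝ) (hρ : 0 ≤ ρ)
    (fk : ℕ → EuclideanSpace ℝ (Fin n) → EReal) (f : EuclideanSpace ℝ (Fin n) → EReal)
    (hfkprop : ∀ k, ∃ x, fk k x ≠ ⊤) (hfprop : ∃ x, f x ≠ ⊤)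
    (hfkbot : ∀ k x, fk k x ≠ ⊥) (hfbot : ∀ x, f x ≠ ⊥)
    (hfklsc : ∀ k, LowerSemicontinuous (fk k)) (hflsc : LowerSemicontinuous f)
    (hfkconv : ∀ k, ∀ x y : EuclideanSpace ℝ (Fin n), ∀ a b : ℝ, 0 ≤ a → 0 ≤ b → a + b = 1 →
      fk k (a • x + b • y) + ((ρ / 2 * ‖a • x + b • y‖ ^ 2 : ℝ) : EReal) ≤
        (a : EReal) * (fk k x + ((ρ / 2 * ‖x‖ ^ 2 : ℝ) : EReal)) +
          (b : EReal) * (fk k y + ((ρ / 2 * ‖y‖ ^ 2 : ℝ) : EReal)))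
    (hfconv : ∀ x y : EuclideanSpace ℝ (Fin n), ∀ a b : ℝ, 0 ≤ a → 0 ≤ b → a + b = 1 →
      f (a • x + b • y) + ((ρ / 2 * ‖a • x + b • y‖ ^ 2 : ℝ) : EReal) ≤
        (a : EReal) * (f x + ((ρ / 2 * ‖x‖ ^ 2 : ℝ) : EReal)) +
          (b : EReal) * (f y + ((ρ / 2 * ‖y‖ ^ 2 : ℝ) : EReal)))
    (hfknn : ∀ k x, (0 : EReal) ≤ fk k x + ((ρ / 2 * ‖x‖ ^ 2 : ℝ) : EReal))
    (hfnn : ∀ x, (0 : EReal) ≤ f x + ((ρ / 2 * ‖x‖ ^ 2 : ℝ) : EReal)) :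
    ((∀ x : EuclideanSpace ℝ (Fin n),
        (∀ u : ℕ → EuclideanSpace ℝ (Fin n), Tendsto u atTop (𝓝 x) →
          f x ≤ liminf (fun k => fk k (u k)) atTop) ∧
        (∃ u : ℕ → EuclideanSpace ℝ (Fin n), Tendsto u atTop (𝓝 x) ∧
          limsup (fun k => fk k (u k)) atTop ≤ f x)) ↔
      (∃ τ : ℝ, 0 < τ ∧ τ * ρ < 1 ∧ ∀ z, Tendsto (fun k => moreauEnv τ (fk k) z) atTop
          (𝓝 (moreauEnv τ f z)))) := by


  have hGk : ∀ k, Good (GG ρ (fk k)) := fun k =>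
    good_GG (hfkprop k) (hfkbot k) (hfklsc k) (hfkconv k) (hfknn k)
  have hG : Good (GG ρ f) := good_GG hfprop hfbot hflsc hfconv hfnn
  constructor
  · intro h
    have h1 := epi_to_PK1 (ρ := ρ) (fun x => (h x).1)
    have h2 := epi_to_PK2 (ρ := ρ) (fun x => (h x).2)
    have hτ : 0 < 1 / (ρ + 1) := by positivity
    have hτρ : 1 / (ρ + 1) * ρ < 1 := by
      rw [div_mul_eq_mul_div, div_lt_one (by positivity)]; linarith
    refine ⟨1 / (ρ + 1), hτ, hτρ, fun z => ?_⟩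
    generalize 1 / (ρ + 1) = τ at hτ hτρ
    have hne : 1 - τ * ρ ≠ 0 := by linarith
    obtain ⟨w, rfl⟩ : ∃ w, z = (1 - τ * ρ) • w := ⟨(1 - τ * ρ)⁻¹ • z, by rw [smul_inv_smul₀ hne]⟩
    rw [env_eq hτ hτρ hfbot hG]
    simp_rw [fun k => env_eq hτ hτρ (hfkbot k) (hGk k)]
    rw [EReal.tendsto_coe]
    exact (core1 hGk hG (div_pos (by linarith) hτ) h1 h2 w).add_const _
  · rintro ⟨τ, hτ, hτρ, h⟩
    have hc : 0 < (1 - τ * ρ) / τ := div_pos (by linarith) hτ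
    have h' : ∀ w, Tendsto (fun k => mm ((1 - τ * ρ) / τ) (GG ρ (fk k)) w) atTop
        (𝓝 (mm ((1 - τ * ρ) / τ) (GG ρ f) w)) := by
      intro w
      have := h ((1 - τ * ρ) • w)
      rw [env_eq hτ hτρ hfbot hG] at this
      simp_rw [fun k => env_eq hτ hτρ (hfkbot k) (hGk k)] at this
      rw [EReal.tendsto_coe] at this
      have h3 := this.sub_const
        (‖(1 - τ * ρ) • w‖ ^ 2 / (2 * τ) - (1 - τ * ρ) / τ / 2 * ‖w‖ ^ 2)
      refine (h3.congr fun k => ?_).trans (le_of_eq ?_)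
      · ring
      · congr 1; ring
    exact fun x => ⟨PK_to_epi1 (core2 hGk hG hc h') x,
      PK_to_epi2 hfbot hGk (core3 hGk hG hc h') x⟩
end

section
/- Let Q ⊆ ℝ^m be a nonempty closed convex set, let U be an open neighborhood of x̄ ∈ ℝⁿ, and let F : U → ℝ^m be twice continuously differentiable with F(x̄) = 0. Assume Robinson's constraint qualification 0 ∈ int{DF(x̄)h − y : h ∈ ℝⁿ, y ∈ ℝ^m with σ_Q(y) < +∞}. Let v̄ ∈ ℝⁿ be such that Λ := {λ ∈ Q : DF(x̄)ᵀλ = v̄} is nonempty, and set φ(x) = σ_Q(F(x)) for x ∈ U. Then for every h ∈ ℝⁿ: if σ_Q(DF(x̄)h) = ⟨v̄, h⟩ then d²φ(x̄|v̄)(h) = sup_{λ ∈ Λ} ⟨λ, D²F(x̄)[h,h]⟩, and otherwise d²φ(x̄|v̄)(h) = +∞. -/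
open Filter Topology Set
open scoped InnerProductSpace

noncomputable section

/-- Support function of `Q ⊆ ℝ^m`, with values in the extended reals. -/
def supportFn {m : ℕ} (Q : Set (EuclideanSpace ℝ (Fin m))) (x : EuclideanSpace ℝ (Fin m)) :
    EReal :=
  ⨆ z ∈ Q, ((⟪z, x⟫_ℝ : ℝ) : EReal)

/-- Second-order difference quotient `Δ²_t f(x|v)(h)`. -/
def secondDQ {n : ℕ} (f : EuclideanSpace ℝ (Fin n) → EReal)
    (x v : EuclideanSpace ℝ (Fin n)) (t : ℝ) (h : EuclideanSpace ℝ (Fin n)) : EReal :=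
  ((2 / t ^ 2 : ℝ) : EReal) * (f (x + t • h) - f x - ((t * ⟪v, h⟫_ℝ : ℝ) : EReal))

/-- Second subderivative `d²f(x|v)(h) = liminf_{t↓0, h̃→h} Δ²_t f(x|v)(h̃)`. -/
def secondSubderivative {n : ℕ} (f : EuclideanSpace ℝ (Fin n) → EReal)
    (x v h : EuclideanSpace ℝ (Fin n)) : EReal :=
  liminf (fun p : ℝ × EuclideanSpace ℝ (Fin n) => secondDQ f x v p.1 p.2)
    ((𝓝[>] (0 : ℝ)) ×ˢ 𝓝 h)

theorem supportFn_le_iff {m : ℕ} (Q : Set (EuclideanSpace ℝ (Fin m)))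
    (x : EuclideanSpace ℝ (Fin m)) (r : ℝ) :
    supportFn Q x ≤ (r : EReal) ↔ ∀ z ∈ Q, ⟪z, x⟫_ℝ ≤ r := by
  simp [supportFn]

theorem aux_duality {V W : Type*} [NormedAddCommGroup V] [InnerProductSpace ℝ V] [CompleteSpace V]
    [NormedAddCommGroup W] [InnerProductSpace ℝ W] [FiniteDimensional ℝ W]
    (Q : Set W) (hQc : IsClosed Q) (hQconv : Convex ℝ Q)
    (A : V →L[ℝ] W) (v : V) (l0 : W) (hl0 : l0 ∈ Q) (hl0v : ∀ w, ⟪l0, A w⟫_ℝ = ⟪v, w⟫_ℝ)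
    (hR : ∀ u : W, ∃ h : V, ∃ y : W, ∃ M : ℝ, (∀ z ∈ Q, ⟪z, y⟫_ℝ ≤ M) ∧ u = A h - y)
    (a : W) (β : ℝ)
    (hβ : ∀ l ∈ Q, (∀ w, ⟪l, A w⟫_ℝ = ⟪v, w⟫_ℝ) → ⟪l, a⟫_ℝ < β) :
    ∃ r < β, ∃ w : V, ∀ z ∈ Q, ⟪z, A w + a⟫_ℝ ≤ r + ⟪v, w⟫_ℝ := by
  by_cases ha : a = 0
  · refine ⟨0, ?_, 0, ?_⟩
    · simpa [ha] using hβ l0 hl0 hl0v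
    · simp [ha]
  let S : W → Set ℝ := fun u => {r | ∃ w : V, ∀ z ∈ Q, ⟪z, A w + u⟫_ℝ ≤ r + ⟪v, w⟫_ℝ}
  have hSne : ∀ u, (S u).Nonempty := by
    intro u
    obtain ⟨h, y, M, hM, hu⟩ := hR (-u)
    refine ⟨M - ⟪v, h⟫_ℝ, h, fun z hz => ?_⟩
    have : A h + u = y := by rw [← neg_neg u, hu]; abel
    rw [this]; linarith [hM z hz]
  have hSlb : ∀ u, ∀ r ∈ S u, ⟪l0, u⟫_ℝ ≤ r := by
    rintro u r ⟨w, hw⟩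
    have := hw l0 hl0
    rw [inner_add_right, hl0v] at this
    linarith
  have hSbdd : ∀ u, BddBelow (S u) := fun u => ⟨_, fun r hr => hSlb u r hr⟩
  have hsmul : ∀ c : ℝ, 0 < c → ∀ u r, r ∈ S u → c * r ∈ S (c • u) := by
    rintro c hc u r ⟨w, hw⟩
    refine ⟨c • w, fun z hz => ?_⟩
    rw [map_smul, ← smul_add, inner_smul_right, inner_smul_right, ← mul_add]
    exact mul_le_mul_of_nonneg_left (hw z hz) hc.le
  have hadd : ∀ u u' r r', r ∈ S u → r' ∈ S u' → r + r' ∈ S (u + u') := by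
    rintro u u' r r' ⟨w, hw⟩ ⟨w', hw'⟩
    refine ⟨w + w', fun z hz => ?_⟩
    have h1 := hw z hz
    have h2 := hw' z hz
    simp only [map_add, inner_add_right] at h1 h2 ⊢
    linarith
  let N : W → ℝ := fun u => sInf (S u)
  have Nle : ∀ u r, r ∈ S u → N u ≤ r := fun u r hr => csInf_le (hSbdd u) hr
  have leN : ∀ u b, (∀ r ∈ S u, b ≤ r) → b ≤ N u := fun u b hb => le_csInf (hSne u) hb
  have Nhom1 : ∀ c : ℝ, 0 < c → ∀ x, N (c • x) ≤ c * N x := by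
    intro c hc x
    rw [← div_le_iff₀' hc]
    refine leN _ _ fun r hr => ?_
    rw [div_le_iff₀' hc]
    exact Nle _ _ (hsmul c hc x r hr)
  have Nhom : ∀ c : ℝ, 0 < c → ∀ x, N (c • x) = c * N x := by
    intro c hc x
    refine le_antisymm (Nhom1 c hc x) ?_
    have := Nhom1 c⁻¹ (inv_pos.2 hc) (c • x)
    rw [smul_smul, inv_mul_cancel₀ hc.ne', one_smul] at this
    rwa [← div_eq_inv_mul, le_div_iff₀' hc] at this
  have Nadd : ∀ x y, N (x + y) ≤ N x + N y := by
    intro x y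
    have h1 : ∀ r ∈ S x, N (x + y) - r ≤ N y := by
      intro r hr
      refine leN _ _ fun r' hr' => ?_
      have := Nle _ _ (hadd _ _ _ _ hr hr')
      linarith
    have : N (x + y) - N y ≤ N x := leN _ _ fun r hr => by linarith [h1 r hr]
    linarith
  have N0 : N 0 = 0 := by
    have := Nhom 2 (by norm_num) 0
    rw [smul_zero] at this; linarith
  obtain ⟨g, hg, hgN⟩ := exists_extension_of_le_sublinear
    (LinearPMap.mkSpanSingleton a (N a) ha) N Nhom Nadd (by
      rintro ⟨x, hx⟩
      obtain ⟨c, rfl⟩ := Submodule.mem_span_singleton.1 hx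
      rw [LinearPMap.mkSpanSingleton'_apply]
      simp only [RingHom.id_apply, smul_eq_mul]
      rcases lt_trichotomy c 0 with hc | hc | hc
      · have h1 := Nadd (c • a) ((-c) • a)
        rw [Nhom (-c) (by linarith), ← add_smul, add_neg_cancel, zero_smul, N0] at h1
        linarith
      · simp [hc, N0]
      · rw [Nhom c hc])
  have hga : g a = N a := by
    have := hg ⟨a, Submodule.mem_span_singleton_self a⟩
    rw [LinearPMap.mkSpanSingleton_apply] at this
    exact this
  let gc : W →L[ℝ] ℝ := LinearMap.toContinuousLinearMap g
  let l : W := (InnerProductSpace.toDual ℝ W).symm gc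
  have hl : ∀ u, ⟪l, u⟫_ℝ = g u := fun u => by
    simp [l, gc]
  have hlA : ∀ w, ⟪l, A w⟫_ℝ = ⟪v, w⟫_ℝ := by
    have h1 : ∀ w, ⟪v, w⟫_ℝ ≤ ⟪l, A w⟫_ℝ := by
      intro w
      have h2 := hgN (-(A w))
      have h3 : N (-(A w)) ≤ -⟪v, w⟫_ℝ := Nle _ _ ⟨w, fun z hz => by simp⟩
      rw [map_neg, ← hl] at h2
      linarith
    intro w
    refine le_antisymm ?_ (h1 w)
    have := h1 (-w)
    simp only [map_neg, inner_neg_right] at this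
    linarith
  have hlQ : l ∈ Q := by
    by_contra hlQ
    obtain ⟨f, u, hfu, hul⟩ := geometric_hahn_banach_closed_point hQconv hQc hlQ
    let y : W := (InnerProductSpace.toDual ℝ W).symm f
    have hy : ∀ z, ⟪z, y⟫_ℝ = f z := fun z => by
      rw [real_inner_comm]; simp [y]
    have h1 : N y ≤ u := Nle _ _ ⟨0, fun z hz => by
      simp only [map_zero, zero_add, inner_zero_right, add_zero]
      rw [hy]; exact (hfu z hz).le⟩
    have h2 := hgN y
    rw [← hl, hy] at h2
    linarith
  have hlt : N a < β := by
    rw [← hga, ← hl]; exact hβ l hlQ hlA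
  obtain ⟨r, hr, hrβ⟩ := exists_lt_of_csInf_lt (hSne a) hlt
  exact ⟨r, hrβ, hr⟩

theorem aux_taylor {V W : Type*} [NormedAddCommGroup V] [NormedSpace ℝ V]
    [NormedAddCommGroup W] [NormedSpace ℝ W]
    (F : V → W) (F' : V → V →L[ℝ] W) (B : V →L[ℝ] V →L[ℝ] W) (x : V)
    (hF' : ∀ᶠ y in 𝓝 x, HasFDerivAt F (F' y) y)
    (hF'' : HasFDerivAt F' B x) :
    (fun u : V => F (x + u) - F x - F' x u - (1 / 2 : ℝ) • B u u) =o[𝓝 0]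
      (fun u : V => ‖u‖ ^ 2) := by
  have hsymm := second_derivative_symmetric_of_eventually hF' hF''
  rw [Asymptotics.isLittleO_iff]
  intro ε hε
  have h1 := (hasFDerivAt_iff_isLittleO_nhds_zero.1 hF'').def hε
  have h2 : ∀ᶠ u in 𝓝 (0 : V), HasFDerivAt F (F' (x + u)) (x + u) := by
    have : Tendsto (fun u : V => x + u) (𝓝 0) (𝓝 x) := by
      simpa using (tendsto_const_nhds (x := x)).add (tendsto_id (x := 𝓝 (0 : V)))
    exact this.eventually hF'
  obtain ⟨δ, hδ, hball⟩ := Metric.eventually_nhds_iff_ball.1 (h1.and h2)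
  refine Metric.eventually_nhds_iff_ball.2 ⟨δ, hδ, fun u hu => ?_⟩
  rw [mem_ball_zero_iff] at hu
  have hsub : ∀ y ∈ Metric.closedBall (0 : V) ‖u‖, y ∈ Metric.ball (0 : V) δ := by
    intro y hy
    rw [mem_closedBall_zero_iff] at hy
    rw [mem_ball_zero_iff]; linarith
  have hder : ∀ y ∈ Metric.closedBall (0 : V) ‖u‖,
      HasFDerivWithinAt (fun u : V => F (x + u) - F x - F' x u - (1 / 2 : ℝ) • B u u)
        (F' (x + y) - F' x - B y) (Metric.closedBall (0 : V) ‖u‖) y := by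
    intro y hy
    have hy2 := (hball y (hsub y hy)).2
    have e1 : HasFDerivAt (fun u : V => F (x + u)) (F' (x + y)) y := by
      simpa [Function.comp_def] using hy2.comp y ((hasFDerivAt_id y).const_add x)
    have e2 : HasFDerivAt (fun u : V => B u u) (B y + B.flip y) y := by
      have := B.hasFDerivAt.clm_apply (hasFDerivAt_id y)
      simpa using this
    have e3 := ((e1.sub_const (F x)).sub (F' x).hasFDerivAt).sub (e2.const_smul (1 / 2 : ℝ))
    refine (e3.congr_fderiv ?_).hasFDerivWithinAt
    ext w
    simp only [sub_apply, smul_apply,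
      add_apply, ContinuousLinearMap.flip_apply]
    rw [hsymm w y, ← two_smul ℝ, smul_smul]
    norm_num
  have hbd : ∀ y ∈ Metric.closedBall (0 : V) ‖u‖, ‖F' (x + y) - F' x - B y‖ ≤ ε * ‖u‖ := by
    intro y hy
    refine (hball y (hsub y hy)).1.trans ?_
    rw [mem_closedBall_zero_iff] at hy
    gcongr
  have := Convex.norm_image_sub_le_of_norm_hasFDerivWithin_le hder hbd
    (convex_closedBall 0 ‖u‖) (x := 0) (y := u) (by simp) (by simp)
  simp only [add_zero, sub_self, map_zero, smul_zero, sub_zero] at this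
  rw [Real.norm_of_nonneg (by positivity)]
  calc _ ≤ _ := this
    _ = _ := by ring

theorem aux_E {V W : Type*} [NormedAddCommGroup V] [NormedSpace ℝ V]
    [NormedAddCommGroup W] [NormedSpace ℝ W]
    (F : V → W) (F' : V → V →L[ℝ] W) (B : V →L[ℝ] V →L[ℝ] W) (x : V)
    (hF' : ∀ᶠ y in 𝓝 x, HasFDerivAt F (F' y) y)
    (hF'' : HasFDerivAt F' B x) (hF0 : F x = 0) (h : V) :
    Tendsto (fun p : ℝ × V => (2 / p.1 ^ 2) • (F (x + p.1 • p.2) - p.1 • F' x p.2))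
      (𝓝[>] (0 : ℝ) ×ˢ 𝓝 h) (𝓝 (B h h)) := by
  have hT := aux_taylor F F' B x hF' hF''
  have t1 : Tendsto (fun p : ℝ × V => p.1) (𝓝[>] (0 : ℝ) ×ˢ 𝓝 h) (𝓝 0) :=
    (tendsto_nhdsWithin_iff.1 tendsto_fst).1
  have t2 : Tendsto (fun p : ℝ × V => p.2) (𝓝[>] (0 : ℝ) ×ˢ 𝓝 h) (𝓝 h) := tendsto_snd
  have t3 : Tendsto (fun p : ℝ × V => p.1 • p.2) (𝓝[>] (0 : ℝ) ×ˢ 𝓝 h) (𝓝 0) := by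
    simpa using t1.smul t2
  have hpos : ∀ᶠ p : ℝ × V in 𝓝[>] (0 : ℝ) ×ˢ 𝓝 h, 0 < p.1 :=
    (tendsto_nhdsWithin_iff.1 (tendsto_fst (f := 𝓝[>] (0 : ℝ)) (g := 𝓝 h))).2
  have o1 := hT.comp_tendsto t3
  have o2 : (fun p : ℝ × V => ‖p.1 • p.2‖ ^ 2) =O[𝓝[>] (0 : ℝ) ×ˢ 𝓝 h]
      (fun p : ℝ × V => p.1 ^ 2) := by
    have hb : ∀ᶠ p : ℝ × V in 𝓝[>] (0 : ℝ) ×ˢ 𝓝 h, ‖p.2‖ < ‖h‖ + 1 :=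
      t2.norm.eventually (gt_mem_nhds (by linarith))
    refine Asymptotics.IsBigO.of_bound ((‖h‖ + 1) ^ 2) ?_
    filter_upwards [hb] with p hp
    rw [norm_smul, norm_pow, norm_mul, norm_norm, norm_norm, norm_pow, mul_pow, mul_comm]
    gcongr
  have o3 := (o1.trans_isBigO o2).tendsto_inv_smul_nhds_zero
  have o4 := o3.const_smul (2 : ℝ)
  have hB : Tendsto (fun p : ℝ × V => B p.2 p.2) (𝓝[>] (0 : ℝ) ×ˢ 𝓝 h) (𝓝 (B h h)) := by
    have : Continuous (fun y : V => B y y) := by fun_prop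
    exact (this.tendsto h).comp t2
  have o5 := o4.add hB
  rw [smul_zero, zero_add] at o5
  refine o5.congr' ?_
  filter_upwards [hpos] with p hp
  simp only [Function.comp, hF0, sub_zero, map_smul, smul_apply, smul_sub,
    smul_smul]
  have : 2 * ((p.1 ^ 2)⁻¹ * (1 / 2 * (p.1 * p.1))) = 1 := by field_simp
  simp only [← mul_assoc] at this ⊢
  rw [this, one_smul]
  simp [div_eq_mul_inv]

theorem aux_key {V W : Type*} [NormedAddCommGroup V] [InnerProductSpace ℝ V] [CompleteSpace V]
    [NormedAddCommGroup W] [InnerProductSpace ℝ W] [FiniteDimensional ℝ W]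
    (Q : Set W) (F : V → W) (A : V →L[ℝ] W) (v x h : V) (a : W)
    (hR : ∀ u : W, ∃ h : V, ∃ y : W, ∃ M : ℝ, (∀ z ∈ Q, ⟪z, y⟫_ℝ ≤ M) ∧ u = A h - y)
    (hFs : HasStrictFDerivAt F A x)
    (hE : Tendsto (fun p : ℝ × V => (2 / p.1 ^ 2) • (F (x + p.1 • p.2) - p.1 • A p.2))
      (𝓝[>] (0 : ℝ) ×ˢ 𝓝 h) (𝓝 a))
    (hh : ∀ z ∈ Q, ⟪z, A h⟫_ℝ ≤ ⟪v, h⟫_ℝ)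
    (r β : ℝ) (hrβ : r < β) (w0 : V) (hw0 : ∀ z ∈ Q, ⟪z, A w0 + a⟫_ℝ ≤ r + ⟪v, w0⟫_ℝ) :
    ∃ C : ℝ, ∀ᶠ t in 𝓝[>] (0 : ℝ), ∃ h' : V, ‖h' - h‖ ≤ C * t ∧
      ∀ z ∈ Q, ⟪z, F (x + t • h')⟫_ℝ - t * ⟪v, h'⟫_ℝ ≤ t ^ 2 / 2 * β := by
  classical
  let b := Module.finBasis ℝ W
  choose H y M hM hb using fun j => hR (b j)
  obtain ⟨k, y', M', hM', hk⟩ := hR (∑ j, y j)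
  let Y : (Fin (Module.finrank ℝ W) → ℝ) →L[ℝ] W :=
    ∑ j, (ContinuousLinearMap.proj (R := ℝ) (φ := fun _ => ℝ) j).smulRight (y j)
  have hY : ∀ c, Y c = ∑ j, c j • y j := by
    intro c; simp [Y, sum_apply]
  let G : V × (Fin (Module.finrank ℝ W) → ℝ) → W := fun p => F p.1 - Y p.2
  let G' : V × (Fin (Module.finrank ℝ W) → ℝ) →L[ℝ] W :=
    A.comp (ContinuousLinearMap.fst ℝ V _) - Y.comp (ContinuousLinearMap.snd ℝ V _)
  have hG : HasStrictFDerivAt G G' (x, 0) := by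
    have e1 : HasStrictFDerivAt (fun p : V × (Fin (Module.finrank ℝ W) → ℝ) => F p.1)
        (A.comp (ContinuousLinearMap.fst ℝ V _)) (x, 0) :=
      HasStrictFDerivAt.comp (x, 0) (g := F) hFs hasStrictFDerivAt_fst
    exact e1.sub (Y.comp (ContinuousLinearMap.snd ℝ V _)).hasStrictFDerivAt
  have hsurj : G'.range = ⊤ := by
    refine LinearMap.range_eq_top.2 fun u => ?_
    refine ⟨(∑ j, b.repr u j • H j, fun j => b.repr u j), ?_⟩
    conv_rhs => rw [← b.sum_repr u]
    simp only [G', ContinuousLinearMap.coe_coe, sub_apply, ContinuousLinearMap.comp_apply,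
      ContinuousLinearMap.coe_fst', ContinuousLinearMap.coe_snd', hY, map_sum, map_smul,
      ← Finset.sum_sub_distrib, ← smul_sub]
    exact Finset.sum_congr rfl fun j _ => by rw [hb j]
  let R := G'.nonlinearRightInverseOfSurjective hsurj
  have hRpos : 0 < R.nnnorm := G'.nonlinearRightInverseOfSurjective_nnnorm_pos hsurj
  have hcpos : 0 < R.nnnorm⁻¹ / 2 := by positivity
  obtain ⟨s, hs, happ⟩ := hG.approximates_deriv_on_nhds (Or.inr hcpos)
  obtain ⟨δ, hδ, hδs⟩ := Metric.mem_nhds_iff.1 hs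
  let κ : ℝ := (R.nnnorm : ℝ)⁻¹ - ((R.nnnorm⁻¹ / 2 : NNReal) : ℝ)
  have hκ : 0 < κ := by
    have : (0 : ℝ) < (R.nnnorm : ℝ)⁻¹ := by positivity
    simp only [κ]; push_cast; linarith
  let N : ℝ := M' + ∑ j, 2 * |M j|
  let ε : ℝ := (β - r) / (|N - ⟪v, k⟫_ℝ + ‖v‖| + 1)
  have hε : 0 < ε := div_pos (by linarith) (by positivity)
  have hεN : ε * (N - ⟪v, k⟫_ℝ + ‖v‖) ≤ β - r := by
    have h1 : ε * (|N - ⟪v, k⟫_ℝ + ‖v‖| + 1) = β - r := by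
      simp only [ε]; field_simp
    have := le_abs_self (N - ⟪v, k⟫_ℝ + ‖v‖)
    nlinarith
  let w : V := w0 + ε • k
  have hcurve : Tendsto (fun t : ℝ => (t, h + (t / 2) • w)) (𝓝[>] (0 : ℝ))
      (𝓝[>] (0 : ℝ) ×ˢ 𝓝 h) := by
    refine tendsto_id.prodMk ?_
    have : Continuous (fun t : ℝ => h + (t / 2) • w) := by fun_prop
    have := this.tendsto 0
    simp only [zero_div, zero_smul, add_zero] at this
    exact this.mono_left nhdsWithin_le_nhds
  have hE1 := (hE.comp hcurve).eventually (Metric.closedBall_mem_nhds a (mul_pos hκ hε))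
  have hsmall : ∀ᶠ t in 𝓝[>] (0 : ℝ), ‖t • (h + (t / 2) • w)‖ + t ^ 2 / 2 * ε < δ := by
    have : Continuous (fun t : ℝ => ‖t • (h + (t / 2) • w)‖ + t ^ 2 / 2 * ε) := by fun_prop
    have := this.tendsto 0
    simp only [zero_smul, norm_zero, ne_eq, OfNat.ofNat_ne_zero, not_false_eq_true, zero_pow,
      zero_div, zero_mul, add_zero] at this
    exact (this.mono_left nhdsWithin_le_nhds).eventually (gt_mem_nhds hδ)
  refine ⟨(‖w‖ + ε) / 2, ?_⟩
  filter_upwards [hE1, hsmall, self_mem_nhdsWithin] with t ht1 ht2 ht0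
  have ht0 : 0 < t := ht0
  have htne : t ≠ 0 := ht0.ne'
  have hρ : 0 < t ^ 2 / 2 * ε := by positivity
  let bt : V × (Fin (Module.finrank ℝ W) → ℝ) := (x + t • (h + (t / 2) • w), 0)
  have hsub : Metric.closedBall bt (t ^ 2 / 2 * ε) ⊆ s := by
    refine Subset.trans (fun p hp => ?_) hδs
    rw [Metric.mem_closedBall] at hp
    rw [Metric.mem_ball]
    have h1 : dist bt (x, 0) = ‖t • (h + (t / 2) • w)‖ := by
      simp [bt, Prod.dist_eq, dist_eq_norm]
    linarith [dist_triangle p bt (x, 0)]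
  have hSurj := happ.surjOn_closedBall_of_nonlinearRightInverse R hρ.le hsub
  let g : W := t • A h + (t ^ 2 / 2) • (A w + a)
  have hg : g ∈ Metric.closedBall (G bt) (κ * (t ^ 2 / 2 * ε)) := by
    simp only [Function.comp] at ht1
    rw [dist_eq_norm] at ht1
    have h1 : G bt - g = (t ^ 2 / 2) • ((2 / t ^ 2) • (F (x + t • (h + (t / 2) • w)) -
        t • A (h + (t / 2) • w)) - a) := by
      have e : t ^ 2 / 2 * (2 / t ^ 2) = 1 := by field_simp
      have e2 : t * (t / 2) = t ^ 2 / 2 := by ring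
      simp only [G, bt, g, map_zero, sub_zero, smul_sub, smul_smul, e, one_smul, map_add, map_smul,
        smul_add, e2]
      rw [← mul_assoc (t ^ 2 / 2), e, one_mul, ← mul_assoc (t ^ 2 / 2), e, one_mul]
      module
    rw [Metric.mem_closedBall, dist_comm, dist_eq_norm, h1, norm_smul,
      Real.norm_of_nonneg (by positivity)]
    calc t ^ 2 / 2 * _ ≤ t ^ 2 / 2 * (κ * ε) := by gcongr
      _ = _ := by ring
  obtain ⟨⟨x', c⟩, hxc, hGx⟩ := hSurj hg
  rw [Metric.mem_closedBall, Prod.dist_eq, max_le_iff] at hxc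
  obtain ⟨hx1, hc1⟩ := hxc
  simp only [bt] at hx1 hc1
  rw [dist_eq_norm] at hx1
  rw [dist_zero_right] at hc1
  have hc : ∀ j, |c j| ≤ t ^ 2 / 2 * ε := fun j => (norm_le_pi_norm c j).trans hc1
  have hFx : F x' = g + ∑ j, c j • y j := by
    have : F x' - Y c = g := hGx
    rw [← this, hY]; abel
  let d : V := x' - (x + t • (h + (t / 2) • w))
  have hx' : x + t • (t⁻¹ • (x' - x)) = x' := by
    rw [smul_smul, mul_inv_cancel₀ htne, one_smul]; abel
  refine ⟨t⁻¹ • (x' - x), ?_, ?_⟩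
  · have h1 : t⁻¹ • (x' - x) - h = (t / 2) • w + t⁻¹ • d := by
      simp only [d, smul_sub, smul_add, smul_smul]
      rw [← mul_assoc, inv_mul_cancel₀ htne]
      module
    rw [h1]
    refine (norm_add_le _ _).trans ?_
    rw [norm_smul, norm_smul, Real.norm_of_nonneg (by positivity : 0 ≤ t / 2),
      Real.norm_of_nonneg (by positivity : 0 ≤ t⁻¹)]
    have : t⁻¹ * ‖d‖ ≤ t⁻¹ * (t ^ 2 / 2 * ε) := by gcongr
    have e : t⁻¹ * (t ^ 2 / 2 * ε) = t / 2 * ε := by field_simp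
    linarith
  · intro z hz
    rw [hx']
    have h1 : t * ⟪v, t⁻¹ • (x' - x)⟫_ℝ = ⟪v, x' - x⟫_ℝ := by
      rw [inner_smul_right, ← mul_assoc, mul_inv_cancel₀ htne, one_mul]
    have h2 : x' - x = t • h + (t ^ 2 / 2) • (w0 + ε • k) + d := by
      simp only [d, w]; module
    have h3 : -(‖v‖ * (t ^ 2 / 2 * ε)) ≤ ⟪v, d⟫_ℝ := by
      have := (abs_le.1 (abs_real_inner_le_norm v d)).1
      have h4 : ‖v‖ * ‖d‖ ≤ ‖v‖ * (t ^ 2 / 2 * ε) := by gcongr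
      linarith
    have hAk : A k = y' + ∑ j, y j := by rw [hk]; abel
    have h5 : ∑ j, (t ^ 2 / 2 * ε + c j) * ⟪z, y j⟫_ℝ ≤ ∑ j, t ^ 2 / 2 * ε * (2 * |M j|) := by
      refine Finset.sum_le_sum fun j _ => ?_
      have hcj := abs_le.1 (hc j)
      calc (t ^ 2 / 2 * ε + c j) * ⟪z, y j⟫_ℝ ≤ (t ^ 2 / 2 * ε + c j) * |M j| :=
            mul_le_mul_of_nonneg_left ((hM j z hz).trans (le_abs_self _)) (by linarith)
        _ ≤ (t ^ 2 / 2 * ε + t ^ 2 / 2 * ε) * |M j| := by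
            refine mul_le_mul_of_nonneg_right ?_ (abs_nonneg _); linarith
        _ = _ := by ring
    have h6 : ⟪z, F x'⟫_ℝ = t * ⟪z, A h⟫_ℝ + t ^ 2 / 2 * ⟪z, A w0 + a⟫_ℝ +
        t ^ 2 / 2 * ε * ⟪z, y'⟫_ℝ + ∑ j, (t ^ 2 / 2 * ε + c j) * ⟪z, y j⟫_ℝ := by
      rw [hFx]
      simp only [g, w, map_add, map_smul, hAk, inner_add_right, inner_smul_right, inner_sum,
        add_mul, Finset.sum_add_distrib, ← Finset.mul_sum]
      ring
    rw [h1, h2, h6]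
    simp only [inner_add_right, inner_smul_right]
    rw [← Finset.mul_sum] at h5
    have i1 := mul_le_mul_of_nonneg_left (hh z hz) ht0.le
    have i2 := mul_le_mul_of_nonneg_left (hw0 z hz) (by positivity : 0 ≤ t ^ 2 / 2)
    have i3 := mul_le_mul_of_nonneg_left (hM' z hz) hρ.le
    have i4 := mul_le_mul_of_nonneg_left hεN (by positivity : 0 ≤ t ^ 2 / 2)
    simp only [inner_add_right] at i2
    simp only [N] at i4
    nlinarith

theorem aux_lower {n m : ℕ} (Q : Set (EuclideanSpace ℝ (Fin m)))
    (F : EuclideanSpace ℝ (Fin n) → EuclideanSpace ℝ (Fin m))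
    (x v h : EuclideanSpace ℝ (Fin n)) (hφ0 : supportFn Q (F x) = 0) (t : ℝ)
    (z : EuclideanSpace ℝ (Fin m)) (hz : z ∈ Q) :
    ((2 / t ^ 2 * (⟪z, F (x + t • h)⟫_ℝ - t * ⟪v, h⟫_ℝ) : ℝ) : EReal) ≤
      secondDQ (fun x => supportFn Q (F x)) x v t h := by
  have h1 : ((⟪z, F (x + t • h)⟫_ℝ : ℝ) : EReal) ≤ supportFn Q (F (x + t • h)) :=
    le_iSup₂ (f := fun z (_ : z ∈ Q) => ((⟪z, F (x + t • h)⟫_ℝ : ℝ) : EReal)) z hz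
  simp only [secondDQ, hφ0, sub_zero]
  rw [EReal.coe_mul, EReal.coe_sub]
  refine mul_le_mul_of_nonneg_left (EReal.sub_le_sub h1 le_rfl) ?_
  exact_mod_cast (by positivity : (0 : ℝ) ≤ 2 / t ^ 2)

theorem aux_upper {n m : ℕ} (Q : Set (EuclideanSpace ℝ (Fin m)))
    (F : EuclideanSpace ℝ (Fin n) → EuclideanSpace ℝ (Fin m))
    (x v h : EuclideanSpace ℝ (Fin n)) (hφ0 : supportFn Q (F x) = 0) (t : ℝ) (ht : 0 < t) (β : ℝ)
    (hz : ∀ z ∈ Q, ⟪z, F (x + t • h)⟫_ℝ - t * ⟪v, h⟫_ℝ ≤ t ^ 2 / 2 * β) :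
    secondDQ (fun x => supportFn Q (F x)) x v t h ≤ (β : EReal) := by
  have h1 : supportFn Q (F (x + t • h)) ≤ ((t ^ 2 / 2 * β + t * ⟪v, h⟫_ℝ : ℝ) : EReal) :=
    (supportFn_le_iff _ _ _).2 fun z hzQ => by linarith [hz z hzQ]
  simp only [secondDQ, hφ0, sub_zero]
  have h2 : (β : EReal) = ((2 / t ^ 2 : ℝ) : EReal) *
      (((t ^ 2 / 2 * β + t * ⟪v, h⟫_ℝ : ℝ) : EReal) - ((t * ⟪v, h⟫_ℝ : ℝ) : EReal)) := by
    rw [← EReal.coe_sub, ← EReal.coe_mul, EReal.coe_eq_coe_iff]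
    field_simp
    ring
  rw [h2]
  refine mul_le_mul_of_nonneg_left (EReal.sub_le_sub h1 le_rfl) ?_
  exact_mod_cast (by positivity : (0 : ℝ) ≤ 2 / t ^ 2)

theorem aux_rob {n m : ℕ} (Q : Set (EuclideanSpace ℝ (Fin m)))
    (A : EuclideanSpace ℝ (Fin n) →L[ℝ] EuclideanSpace ℝ (Fin m))
    (hRob : (0 : EuclideanSpace ℝ (Fin m)) ∈
      interior {z | ∃ h : EuclideanSpace ℝ (Fin n), ∃ y : EuclideanSpace ℝ (Fin m),
        supportFn Q y ≠ ⊤ ∧ z = A h - y}) :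
    ∀ u : EuclideanSpace ℝ (Fin m), ∃ h : EuclideanSpace ℝ (Fin n),
      ∃ y : EuclideanSpace ℝ (Fin m), ∃ M : ℝ, (∀ z ∈ Q, ⟪z, y⟫_ℝ ≤ M) ∧ u = A h - y := by
  intro u
  have h1 : Tendsto (fun c : ℝ => c • u) (𝓝[>] 0) (𝓝 0) := by
    have : Continuous (fun c : ℝ => c • u) := by fun_prop
    have := this.tendsto 0
    rw [zero_smul] at this
    exact this.mono_left nhdsWithin_le_nhds
  obtain ⟨c, ⟨h, y, hy, hcu⟩, hc⟩ :=
    ((h1.eventually (mem_interior_iff_mem_nhds.1 hRob)).and self_mem_nhdsWithin).exists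
  have hc : 0 < c := hc
  have hM := (supportFn_le_iff Q y _).1 (EReal.le_coe_toReal hy)
  refine ⟨c⁻¹ • h, c⁻¹ • y, c⁻¹ * (supportFn Q y).toReal, fun z hz => ?_, ?_⟩
  · rw [inner_smul_right]
    exact mul_le_mul_of_nonneg_left (hM z hz) (by positivity)
  · rw [map_smul, ← smul_sub, ← hcu, smul_smul, inv_mul_cancel₀ hc.ne', one_smul]

theorem stmt5 {n m : ℕ} (Q : Set (EuclideanSpace ℝ (Fin m)))
    (hQne : Q.Nonempty) (hQc : IsClosed Q) (hQconv : Convex ℝ Q)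
    (U : Set (EuclideanSpace ℝ (Fin n))) (hU : IsOpen U)
    (xbar : EuclideanSpace ℝ (Fin n)) (hxbar : xbar ∈ U)
    (F : EuclideanSpace ℝ (Fin n) → EuclideanSpace ℝ (Fin m))
    (F' : EuclideanSpace ℝ (Fin n) → (EuclideanSpace ℝ (Fin n) →L[ℝ] EuclideanSpace ℝ (Fin m)))
    (F'' : EuclideanSpace ℝ (Fin n) →
      (EuclideanSpace ℝ (Fin n) →L[ℝ] EuclideanSpace ℝ (Fin n) →L[ℝ] EuclideanSpace ℝ (Fin m)))
    (hF' : ∀ x ∈ U, HasFDerivAt F (F' x) x)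
    (hF'' : ∀ x ∈ U, HasFDerivAt F' (F'' x) x)
    (hF''cont : ContinuousOn F'' U)
    (hF0 : F xbar = 0)
    (hRob : (0 : EuclideanSpace ℝ (Fin m)) ∈
      interior {z | ∃ h : EuclideanSpace ℝ (Fin n), ∃ y : EuclideanSpace ℝ (Fin m),
        supportFn Q y ≠ ⊤ ∧ z = F' xbar h - y})
    (vbar : EuclideanSpace ℝ (Fin n))
    (hΛne : {lam ∈ Q | ContinuousLinearMap.adjoint (F' xbar) lam = vbar}.Nonempty) :
    ∀ h : EuclideanSpace ℝ (Fin n),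
      (supportFn Q (F' xbar h) = ((⟪vbar, h⟫_ℝ : ℝ) : EReal) →
        secondSubderivative (fun x => supportFn Q (F x)) xbar vbar h =
          ⨆ lam ∈ {lam ∈ Q | ContinuousLinearMap.adjoint (F' xbar) lam = vbar},
            ((⟪lam, F'' xbar h h⟫_ℝ : ℝ) : EReal)) ∧
      (supportFn Q (F' xbar h) ≠ ((⟪vbar, h⟫_ℝ : ℝ) : EReal) →
        secondSubderivative (fun x => supportFn Q (F x)) xbar vbar h = ⊤) := by
  intro h
  have hUn : U ∈ 𝓝 xbar := hU.mem_nhds hxbar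
  have hF'e : ∀ᶠ y in 𝓝 xbar, HasFDerivAt F (F' y) y := by
    filter_upwards [hUn] with y hy using hF' y hy
  have hFs : HasStrictFDerivAt F (F' xbar) xbar :=
    hasStrictFDerivAt_of_hasFDerivAt_of_continuousAt hF'e (hF'' xbar hxbar).continuousAt
  have hE := aux_E F F' (F'' xbar) xbar hF'e (hF'' xbar hxbar) hF0 h
  have hR := aux_rob Q (F' xbar) hRob
  have hadj : ∀ l, ContinuousLinearMap.adjoint (F' xbar) l = vbar ↔
      ∀ w, ⟪l, F' xbar w⟫_ℝ = ⟪vbar, w⟫_ℝ := by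
    intro l
    constructor
    · rintro rfl w
      rw [ContinuousLinearMap.adjoint_inner_left]
    · intro hl
      refine ext_inner_right ℝ fun w => ?_
      rw [ContinuousLinearMap.adjoint_inner_left, hl]
  obtain ⟨l0, hl0Q, hl0⟩ := hΛne
  have hl0v := (hadj l0).1 hl0
  have hφ0 : supportFn Q (F xbar) = 0 := by
    rw [hF0]
    refine le_antisymm ?_ ?_
    · exact (supportFn_le_iff Q 0 0).2 fun z _ => by simp
    · have := le_iSup₂ (f := fun z (_ : z ∈ Q) =>
        ((⟪z, (0 : EuclideanSpace ℝ (Fin m))⟫_ℝ : ℝ) : EReal)) l0 hl0Q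
      simpa [supportFn] using this
  have hpos : ∀ᶠ p : ℝ × EuclideanSpace ℝ (Fin n) in 𝓝[>] (0 : ℝ) ×ˢ 𝓝 h, 0 < p.1 :=
    (tendsto_nhdsWithin_iff.1 (tendsto_fst (f := 𝓝[>] (0 : ℝ)) (g := 𝓝 h))).2
  have hsplit : ∀ z : EuclideanSpace ℝ (Fin m), ∀ p : ℝ × EuclideanSpace ℝ (Fin n), 0 < p.1 →
      2 / p.1 ^ 2 * (⟪z, F (xbar + p.1 • p.2)⟫_ℝ - p.1 * ⟪vbar, p.2⟫_ℝ) =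
      ⟪z, (2 / p.1 ^ 2) • (F (xbar + p.1 • p.2) - p.1 • F' xbar p.2)⟫_ℝ +
        2 * (p.1⁻¹ * (⟪z, F' xbar p.2⟫_ℝ - ⟪vbar, p.2⟫_ℝ)) := by
    intro z p hp
    rw [inner_smul_right, inner_sub_right, inner_smul_right]
    field_simp
    ring
  constructor
  · intro hh
    have hh' := (supportFn_le_iff Q _ _).1 hh.le
    apply le_antisymm
    · refine EReal.le_of_forall_lt_iff_le.1 fun β hβ => ?_
      obtain ⟨r, hrβ, w0, hw0⟩ := aux_duality Q hQc hQconv (F' xbar) vbar l0 hl0Q hl0v hR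
        (F'' xbar h h) β (fun l hl hlv => by
          have h1 := le_iSup₂ (f := fun l (_ : l ∈ {lam ∈ Q |
            ContinuousLinearMap.adjoint (F' xbar) lam = vbar}) =>
            ((⟪l, F'' xbar h h⟫_ℝ : ℝ) : EReal)) l ⟨hl, (hadj l).2 hlv⟩
          exact EReal.coe_lt_coe_iff.1 (h1.trans_lt hβ))
      obtain ⟨C, hC⟩ := aux_key Q F (F' xbar) vbar xbar h _ hR hFs hE hh' r β hrβ w0 hw0
      refine liminf_le_of_frequently_le' ?_
      intro hcon
      obtain ⟨pa, hpa, pb, hpb, hab⟩ := eventually_prod_iff.1 hcon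
      obtain ⟨δ, hδ, hball⟩ := Metric.eventually_nhds_iff_ball.1 hpb
      have hCs : ∀ᶠ t in 𝓝[>] (0 : ℝ), C * t < δ := by
        have : Continuous (fun t : ℝ => C * t) := by fun_prop
        have := this.tendsto 0
        rw [mul_zero] at this
        exact (this.mono_left nhdsWithin_le_nhds).eventually (gt_mem_nhds hδ)
      obtain ⟨t, ⟨⟨⟨h', hh1, hh2⟩, htC⟩, htpa⟩, ht0⟩ :=
        (((hC.and hCs).and hpa).and self_mem_nhdsWithin).exists
      refine hab htpa (hball h' ?_) ?_
      · rw [mem_ball_iff_norm]; linarith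
      · exact aux_upper Q F xbar vbar h' hφ0 t ht0 β hh2
    · refine iSup₂_le fun l hl => ?_
      have hlv := (hadj l).1 hl.2
      refine EReal.ge_of_forall_gt_iff_ge.1 fun β hβ => ?_
      refine le_liminf_of_le (by isBoundedDefault) ?_
      have h1 := (tendsto_const_nhds (x := l)).inner hE (𝕜 := ℝ)
      filter_upwards [h1.eventually (lt_mem_nhds (EReal.coe_lt_coe_iff.1 hβ)), hpos] with p hp hp0
      refine le_trans ?_ (aux_lower Q F xbar vbar p.2 hφ0 p.1 l hl.1)
      rw [hsplit l p hp0, hlv, sub_self, mul_zero, mul_zero, add_zero]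
      exact_mod_cast hp.le
  · intro hne
    have hnle : ¬ ∀ z ∈ Q, ⟪z, F' xbar h⟫_ℝ ≤ ⟪vbar, h⟫_ℝ := by
      intro hle
      refine hne (le_antisymm ((supportFn_le_iff Q _ _).2 hle) ?_)
      rw [← hl0v]
      exact le_iSup₂ (f := fun z (_ : z ∈ Q) => ((⟪z, F' xbar h⟫_ℝ : ℝ) : EReal)) l0 hl0Q
    push Not at hnle
    obtain ⟨z, hz, hzh⟩ := hnle
    rw [eq_top_iff]
    refine EReal.ge_of_forall_gt_iff_ge.1 fun β _ => ?_
    refine le_liminf_of_le (by isBoundedDefault) ?_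
    have h1 := (tendsto_const_nhds (x := z)).inner hE (𝕜 := ℝ)
    have h2 : Tendsto (fun p : ℝ × EuclideanSpace ℝ (Fin n) =>
        ⟪z, F' xbar p.2⟫_ℝ - ⟪vbar, p.2⟫_ℝ) (𝓝[>] (0 : ℝ) ×ˢ 𝓝 h)
        (𝓝 (⟪z, F' xbar h⟫_ℝ - ⟪vbar, h⟫_ℝ)) := by
      have : Continuous (fun y : EuclideanSpace ℝ (Fin n) =>
        ⟪z, F' xbar y⟫_ℝ - ⟪vbar, y⟫_ℝ) := by fun_prop
      exact (this.tendsto h).comp tendsto_snd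
    have h3 : Tendsto (fun p : ℝ × EuclideanSpace ℝ (Fin n) => p.1⁻¹)
        (𝓝[>] (0 : ℝ) ×ˢ 𝓝 h) atTop := tendsto_inv_nhdsGT_zero.comp tendsto_fst
    have h4 := h1.add_atTop ((h3.atTop_mul_pos (sub_pos.2 hzh) h2).const_mul_atTop
      (zero_lt_two (α := ℝ)))
    filter_upwards [h4.eventually (eventually_ge_atTop β), hpos] with p hp hp0
    refine le_trans ?_ (aux_lower Q F xbar vbar p.2 hφ0 p.1 z hz)
    rw [hsplit z p hp0]
    exact_mod_cast hp

end
end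

section
/- Let Q ⊆ ℝ^m be a nonempty closed convex set, let U be an open neighborhood of x̄ ∈ ℝⁿ, let F : U → ℝ^m be twice continuously differentiable with F(x̄) = 0, and let λ̄ ∈ Q. Assume Robinson's constraint qualification 0 ∈ int{DF(x̄)h − y : h ∈ ℝⁿ, y ∈ ℝ^m with σ_Q(y) < +∞} and the strict constraint qualification {DF(x̄)h − v : h ∈ ℝⁿ, v ∈ N_Q(λ̄)} = ℝ^m. Set φ(x) = σ_Q(F(x)) for x ∈ U. Then for every h ∈ ℝⁿ: d²_s φ(x̄ | DF(x̄)ᵀλ̄)(h) ≥ d²_s σ_Q(0|λ̄)(DF(x̄)h) + ⟨λ̄, D²F(x̄)[h,h]⟩. -/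
open Filter Topology Set
open scoped InnerProductSpace

noncomputable section

/-- The normal cone of a convex set `Q ⊆ ℝ^m` at a point `lam ∈ Q`. -/
def normalCone {m : ℕ} (Q : Set (EuclideanSpace ℝ (Fin m))) (lam : EuclideanSpace ℝ (Fin m)) :
    Set (EuclideanSpace ℝ (Fin m)) :=
  {v | ∀ y ∈ Q, ⟪v, y - lam⟫_ℝ ≤ 0}

/-- Strict second subderivative of the support function `σ_Q` at `0` for `lam0` in direction `w`:
the liminf of `Δ²_t σ_Q(x|λ)(w̃)` over `t ↓ 0`, `w̃ → w`, `x → 0`, `Q ∋ λ → lam0` subject to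
`σ_Q(x) = ⟨λ, x⟩`. -/
def strictD2supp {m : ℕ} (Q : Set (EuclideanSpace ℝ (Fin m))) (lam0 : EuclideanSpace ℝ (Fin m))
    (w : EuclideanSpace ℝ (Fin m)) : EReal :=
  liminf
    (fun p : ℝ × EuclideanSpace ℝ (Fin m) × EuclideanSpace ℝ (Fin m) × EuclideanSpace ℝ (Fin m) =>
      secondDQ (supportFn Q) p.2.2.1 p.2.2.2 p.1 p.2.1)
    (((𝓝[>] (0 : ℝ)) ×ˢ (𝓝 w ×ˢ (𝓝 (0 : EuclideanSpace ℝ (Fin m)) ×ˢ 𝓝 lam0))) ⊓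
      Filter.principal
        {p : ℝ × EuclideanSpace ℝ (Fin m) × EuclideanSpace ℝ (Fin m) × EuclideanSpace ℝ (Fin m) |
          p.2.2.2 ∈ Q ∧ supportFn Q p.2.2.1 = ((⟪p.2.2.2, p.2.2.1⟫_ℝ : ℝ) : EReal)})

/-- Strict second subderivative of `φ = σ_Q ∘ F` at `xbar` for `vbar` in direction `h`:
the liminf of `Δ²_t φ(x|v)(h̃)` over `t ↓ 0`, `h̃ → h`, `x → xbar`, `v → vbar` subject to
`v = DF(x)ᵀ λ` for some `λ ∈ Q` with `σ_Q(F x) = ⟨λ, F x⟩`. -/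
def strictD2phi {n m : ℕ} (Q : Set (EuclideanSpace ℝ (Fin m)))
    (F : EuclideanSpace ℝ (Fin n) → EuclideanSpace ℝ (Fin m))
    (F' : EuclideanSpace ℝ (Fin n) → (EuclideanSpace ℝ (Fin n) →L[ℝ] EuclideanSpace ℝ (Fin m)))
    (xbar vbar h : EuclideanSpace ℝ (Fin n)) : EReal :=
  liminf
    (fun p : ℝ × EuclideanSpace ℝ (Fin n) × EuclideanSpace ℝ (Fin n) × EuclideanSpace ℝ (Fin n) =>
      secondDQ (fun x => supportFn Q (F x)) p.2.2.1 p.2.2.2 p.1 p.2.1)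
    (((𝓝[>] (0 : ℝ)) ×ˢ (𝓝 h ×ˢ (𝓝 xbar ×ˢ 𝓝 vbar))) ⊓
      Filter.principal
        {p : ℝ × EuclideanSpace ℝ (Fin n) × EuclideanSpace ℝ (Fin n) × EuclideanSpace ℝ (Fin n) |
          ∃ lam ∈ Q, p.2.2.2 = ContinuousLinearMap.adjoint (F' p.2.2.1) lam ∧
            supportFn Q (F p.2.2.1) = ((⟪lam, F p.2.2.1⟫_ℝ : ℝ) : EReal)})

lemma aux_taylor_s6 {E G : Type*} [NormedAddCommGroup E] [NormedSpace ℝ E]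
    [NormedAddCommGroup G] [NormedSpace ℝ G]
    (U : Set E) (hU : IsOpen U) (xbar : E) (hxbar : xbar ∈ U)
    (F : E → G) (F' : E → (E →L[ℝ] G)) (F'' : E → (E →L[ℝ] E →L[ℝ] G))
    (hF' : ∀ x ∈ U, HasFDerivAt F (F' x) x)
    (hF'' : ∀ x ∈ U, HasFDerivAt F' (F'' x) x)
    (hF''cont : ContinuousOn F'' U) (h : E) :
    Tendsto (fun p : ℝ × E × E =>
      (2 / p.1 ^ 2) • (F (p.2.2 + p.1 • p.2.1) - F p.2.2 - p.1 • F' p.2.2 p.2.1))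
      (𝓝[>] (0 : ℝ) ×ˢ (𝓝 h ×ˢ 𝓝 xbar)) (𝓝 (F'' xbar h h)) := by
  have hst : HasStrictFDerivAt F' (F'' xbar) xbar :=
    hasStrictFDerivAt_of_hasFDerivAt_of_continuousAt
      (Filter.eventually_of_mem (hU.mem_nhds hxbar) hF'')
      (hF''cont.continuousAt (hU.mem_nhds hxbar))
  rw [hasStrictFDerivAt_iff_isLittleO, Asymptotics.isLittleO_iff] at hst
  have hh : Tendsto (fun p : ℝ × E × E => p.2.1)
      (𝓝[>] (0 : ℝ) ×ˢ (𝓝 h ×ˢ 𝓝 xbar)) (𝓝 h) := tendsto_fst.comp tendsto_snd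
  have hx : Tendsto (fun p : ℝ × E × E => p.2.2)
      (𝓝[>] (0 : ℝ) ×ˢ (𝓝 h ×ˢ 𝓝 xbar)) (𝓝 xbar) := tendsto_snd.comp tendsto_snd
  have ht : Tendsto (fun p : ℝ × E × E => p.1)
      (𝓝[>] (0 : ℝ) ×ˢ (𝓝 h ×ˢ 𝓝 xbar)) (𝓝[>] 0) := tendsto_fst
  have ht0 : Tendsto (fun p : ℝ × E × E => p.1)
      (𝓝[>] (0 : ℝ) ×ˢ (𝓝 h ×ˢ 𝓝 xbar)) (𝓝 0) := ht.mono_right nhdsWithin_le_nhds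
  have hlim : Tendsto (fun p : ℝ × E × E => F'' xbar p.2.1 p.2.1)
      (𝓝[>] (0 : ℝ) ×ˢ (𝓝 h ×ˢ 𝓝 xbar)) (𝓝 (F'' xbar h h)) := by
    have : Continuous (fun k : E => F'' xbar k k) := by fun_prop
    exact (this.tendsto h).comp hh
  have hdiff : Tendsto (fun p : ℝ × E × E =>
      (2 / p.1 ^ 2) • (F (p.2.2 + p.1 • p.2.1) - F p.2.2 - p.1 • F' p.2.2 p.2.1)
        - F'' xbar p.2.1 p.2.1)
      (𝓝[>] (0 : ℝ) ×ˢ (𝓝 h ×ˢ 𝓝 xbar)) (𝓝 0) := by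
    rw [Metric.tendsto_nhds]
    intro η hη
    set H : ℝ := ‖h‖ + 1 with hH
    have hHpos : 0 < H := by positivity
    set ε : ℝ := η / (4 * H ^ 2) with hε
    have hεpos : 0 < ε := by positivity
    have h1 := hst hεpos
    have h2 : ∀ᶠ q : E × E in 𝓝 (xbar, xbar), q.1 ∈ U ∧ q.2 ∈ U := by
      rw [nhds_prod_eq]
      exact (tendsto_fst.eventually (hU.mem_nhds hxbar)).and
        (tendsto_snd.eventually (hU.mem_nhds hxbar))
    obtain ⟨δ, hδ, hball⟩ := Metric.eventually_nhds_iff.1 (h1.and h2)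
    have e1 : ∀ᶠ p : ℝ × E × E in (𝓝[>] (0 : ℝ) ×ˢ (𝓝 h ×ˢ 𝓝 xbar)), 0 < p.1 :=
      ht.eventually self_mem_nhdsWithin
    have e2 : ∀ᶠ p : ℝ × E × E in (𝓝[>] (0 : ℝ) ×ˢ (𝓝 h ×ˢ 𝓝 xbar)), p.1 < δ / 2 / H :=
      ht0.eventually (gt_mem_nhds (by positivity))
    have e3 : ∀ᶠ p : ℝ × E × E in (𝓝[>] (0 : ℝ) ×ˢ (𝓝 h ×ˢ 𝓝 xbar)), ‖p.2.1‖ < H :=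
      hh.norm.eventually (gt_mem_nhds (by linarith))
    have e4 : ∀ᶠ p : ℝ × E × E in (𝓝[>] (0 : ℝ) ×ˢ (𝓝 h ×ˢ 𝓝 xbar)), dist p.2.2 xbar < δ / 2 :=
      hx.eventually (Metric.ball_mem_nhds _ (by positivity))
    filter_upwards [e1, e2, e3, e4] with p p1 p2 p3 p4
    obtain ⟨t, k, x⟩ := p
    simp only at p1 p2 p3 p4 ⊢
    have key : ∀ s ∈ Icc (0 : ℝ) t, dist (x + s • k) xbar < δ := by
      intro s hs
      have : ‖s • k‖ < δ / 2 := by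
        rw [norm_smul, Real.norm_of_nonneg hs.1]
        have : t * H < δ / 2 := by rwa [lt_div_iff₀ hHpos] at p2
        have : s * ‖k‖ ≤ t * H := mul_le_mul hs.2 p3.le (norm_nonneg _) p1.le
        linarith
      calc dist (x + s • k) xbar ≤ dist (x + s • k) x + dist x xbar := dist_triangle _ _ _
        _ < δ := by
          rw [dist_eq_norm, add_sub_cancel_left]; linarith
    have key0 : dist x xbar < δ := by linarith
    have hmv := norm_image_sub_le_of_norm_deriv_le_segment' (a := 0) (b := t)
      (f := fun s : ℝ => F (x + s • k) - s • F' x k - (s ^ 2 / 2) • F'' xbar k k)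
      (f' := fun s : ℝ => F' (x + s • k) k - F' x k - s • F'' xbar k k)
      (C := ε * t * H ^ 2) ?_ ?_ t ⟨p1.le, le_rfl⟩
    · have hb : ‖F (x + t • k) - F x - t • F' x k - (t ^ 2 / 2) • F'' xbar k k‖
          ≤ ε * t * H ^ 2 * t := by
        simp only [zero_smul, add_zero, sub_zero] at hmv
        norm_num at hmv
        convert hmv using 2
        abel
      rw [dist_zero_right]
      have heq : (2 / t ^ 2) • (F (x + t • k) - F x - t • F' x k) - F'' xbar k k
          = (2 / t ^ 2) • (F (x + t • k) - F x - t • F' x k - (t ^ 2 / 2) • F'' xbar k k) := by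
        rw [smul_sub (2 / t ^ 2) (F (x + t • k) - F x - t • F' x k), smul_smul]
        have : 2 / t ^ 2 * (t ^ 2 / 2) = 1 := by field_simp
        rw [this, one_smul]
      rw [heq, norm_smul, Real.norm_of_nonneg (by positivity)]
      calc 2 / t ^ 2 * _ ≤ 2 / t ^ 2 * (ε * t * H ^ 2 * t) := by gcongr
        _ = η / 2 := by rw [hε]; field_simp; ring
        _ < η := by linarith
    · intro s hs
      have hq := (hball (y := (x + s • k, x)) (by
        rw [Prod.dist_eq]; exact max_lt (key s hs) key0)).2.1
      have hl : HasDerivAt (fun s : ℝ => x + s • k) k s := by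
        simpa using ((hasDerivAt_id s).smul_const k).const_add x
      have d1 : HasDerivAt (fun s : ℝ => F (x + s • k)) (F' (x + s • k) k) s :=
        (hF' _ hq).comp_hasDerivAt s hl
      have d2 : HasDerivAt (fun s : ℝ => s • F' x k) (F' x k) s := by
        simpa using ((hasDerivAt_id s).smul_const (F' x k))
      have d3 : HasDerivAt (fun s : ℝ => (s ^ 2 / 2) • F'' xbar k k) (s • F'' xbar k k) s := by
        have : HasDerivAt (fun s : ℝ => s ^ 2 / 2) s s := by
          have := (hasDerivAt_pow 2 s).div_const 2
          have e : ((2 : ℕ) : ℝ) * s ^ (2 - 1) / 2 = s := by norm_num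
          rw [e] at this
          exact this
        exact this.smul_const _
      exact ((d1.sub d2).sub d3).hasDerivWithinAt
    · intro s hs
      have hq := (hball (y := (x + s • k, x)) (by
        rw [Prod.dist_eq]; exact max_lt (key s ⟨hs.1, hs.2.le⟩) key0)).1
      simp only [add_sub_cancel_left, map_smul] at hq
      have : F' (x + s • k) k - F' x k - s • F'' xbar k k
          = (F' (x + s • k) - F' x - s • F'' xbar k) k := by simp
      rw [this]
      calc _ ≤ ‖F' (x + s • k) - F' x - s • F'' xbar k‖ * ‖k‖ :=
            ContinuousLinearMap.le_opNorm _ _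
        _ ≤ (ε * ‖s • k‖) * ‖k‖ := by gcongr
        _ = ε * s * ‖k‖ ^ 2 := by
            rw [norm_smul, Real.norm_of_nonneg hs.1]; ring
        _ ≤ ε * t * H ^ 2 := by
            have := hs.1
            have := hs.2.le
            gcongr
  have := hdiff.add hlim
  simpa using this

lemma aux_taylor_comp {ι E G : Type*} [NormedAddCommGroup E] [NormedSpace ℝ E]
    [NormedAddCommGroup G] [NormedSpace ℝ G]
    (U : Set E) (hU : IsOpen U) (xbar : E) (hxbar : xbar ∈ U)
    (F : E → G) (F' : E → (E →L[ℝ] G)) (F'' : E → (E →L[ℝ] E →L[ℝ] G))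
    (hF' : ∀ x ∈ U, HasFDerivAt F (F' x) x)
    (hF'' : ∀ x ∈ U, HasFDerivAt F' (F'' x) x)
    (hF''cont : ContinuousOn F'' U) (h : E) (L : Filter ι) (t : ι → ℝ) (k x : ι → E)
    (ht : Tendsto t L (𝓝[>] 0)) (hk : Tendsto k L (𝓝 h)) (hx : Tendsto x L (𝓝 xbar)) :
    Tendsto (fun i => (2 / t i ^ 2) • (F (x i + t i • k i) - F (x i) - t i • F' (x i) (k i)))
      L (𝓝 (F'' xbar h h)) := by
  have h1 := aux_taylor_s6 U hU xbar hxbar F F' F'' hF' hF'' hF''cont h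
  have h2 : Tendsto (fun i => (t i, k i, x i)) L (𝓝[>] (0 : ℝ) ×ˢ (𝓝 h ×ˢ 𝓝 xbar)) :=
    ht.prodMk (hk.prodMk hx)
  have h3 := Tendsto.comp h1 h2
  simpa only [Function.comp_def] using h3

lemma aux_apply {ι E G : Type*} [NormedAddCommGroup E] [NormedSpace ℝ E]
    [NormedAddCommGroup G] [NormedSpace ℝ G] (L : Filter ι) (A : ι → E →L[ℝ] G) (B : E →L[ℝ] G)
    (k : ι → E) (h : E) (hA : Tendsto A L (𝓝 B)) (hk : Tendsto k L (𝓝 h)) :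
    Tendsto (fun i => A i (k i)) L (𝓝 (B h)) := by
  have h1 : Continuous (fun p : (E →L[ℝ] G) × E => p.1 p.2) :=
    isBoundedBilinearMap_apply.continuous
  have h2 := Tendsto.comp (h1.tendsto (B, h)) (hA.prodMk_nhds hk)
  simpa only [Function.comp_def] using h2

lemma aux_mult {n m : ℕ} (Q : Set (EuclideanSpace ℝ (Fin m)))
    (A : EuclideanSpace ℝ (Fin n) →L[ℝ] EuclideanSpace ℝ (Fin m))
    (lambar : EuclideanSpace ℝ (Fin m))
    (hStrict : {z | ∃ h : EuclideanSpace ℝ (Fin n), ∃ v ∈ normalCone Q lambar,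
        z = A h - v} = Set.univ) :
    ∃ C : ℝ, 0 < C ∧ ∀ lam ∈ Q,
      ‖lam - lambar‖ ≤ C * ‖ContinuousLinearMap.adjoint A (lam - lambar)‖ := by
  have hz : ∀ z : EuclideanSpace ℝ (Fin m), ∃ c : ℝ, 0 ≤ c ∧ ∀ lam ∈ Q,
      - ⟪z, lam - lambar⟫_ℝ ≤ c * ‖ContinuousLinearMap.adjoint A (lam - lambar)‖ := by
    intro z
    have : z ∈ {z | ∃ h : EuclideanSpace ℝ (Fin n), ∃ v ∈ normalCone Q lambar,
        z = A h - v} := by rw [hStrict]; trivial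
    obtain ⟨h, v, hv, rfl⟩ := this
    refine ⟨‖h‖, norm_nonneg _, fun lam hl => ?_⟩
    have h1 := hv lam hl
    have h2 := abs_real_inner_le_norm h (ContinuousLinearMap.adjoint A (lam - lambar))
    rw [ContinuousLinearMap.adjoint_inner_right] at h2
    rw [inner_sub_left]
    have := neg_abs_le ⟪A h, lam - lambar⟫_ℝ
    linarith
  choose c hc0 hc using hz
  refine ⟨1 + ∑ i : Fin m, (c (EuclideanSpace.single i 1) + c (-EuclideanSpace.single i 1)), ?_, ?_⟩
  · have : 0 ≤ ∑ i : Fin m, (c (EuclideanSpace.single i 1) + c (-EuclideanSpace.single i 1)) :=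
      Finset.sum_nonneg fun i _ => add_nonneg (hc0 _) (hc0 _)
    linarith
  intro lam hl
  set d := lam - lambar with hd
  set N := ‖ContinuousLinearMap.adjoint A d‖ with hN
  have hNn : 0 ≤ N := norm_nonneg _
  have hcoord : ∀ i, |d i| ≤ (c (EuclideanSpace.single i 1) + c (-EuclideanSpace.single i 1)) * N := by
    intro i
    have h1 := hc (EuclideanSpace.single i 1) lam hl
    have h2 := hc (-EuclideanSpace.single i 1) lam hl
    rw [inner_neg_left] at h2
    simp only [EuclideanSpace.inner_single_left, ← hd, ← hN, map_one, one_mul] at h1 h2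
    have h3 := mul_nonneg (hc0 (EuclideanSpace.single i 1)) hNn
    have h4 := mul_nonneg (hc0 (-EuclideanSpace.single i 1)) hNn
    rw [abs_le]; constructor <;> linarith
  have hsum : ‖d‖ ≤ ∑ i, |d i| := by
    have : d = ∑ i, EuclideanSpace.single i (d i) := by
      ext j
      simp [Finset.sum_apply, Pi.single_apply]
    calc ‖d‖ = ‖∑ i, EuclideanSpace.single i (d i)‖ := by rw [← this]
      _ ≤ ∑ i, ‖EuclideanSpace.single i (d i)‖ := norm_sum_le _ _
      _ = ∑ i, |d i| := by simp
  calc ‖d‖ ≤ _ := hsum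
    _ ≤ ∑ i, (c (EuclideanSpace.single i 1) + c (-EuclideanSpace.single i 1)) * N :=
      Finset.sum_le_sum fun i _ => hcoord i
    _ = (∑ i, (c (EuclideanSpace.single i 1) + c (-EuclideanSpace.single i 1))) * N := by
      rw [Finset.sum_mul]
    _ ≤ _ := by linarith

lemma aux_lam_tendsto {ι : Type*} {n m : ℕ} (L : Filter ι) (Q : Set (EuclideanSpace ℝ (Fin m)))
    (A : EuclideanSpace ℝ (Fin n) →L[ℝ] EuclideanSpace ℝ (Fin m))
    (lambar : EuclideanSpace ℝ (Fin m))
    (hStrict : {z | ∃ h : EuclideanSpace ℝ (Fin n), ∃ v ∈ normalCone Q lambar,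
        z = A h - v} = Set.univ)
    (B : ι → EuclideanSpace ℝ (Fin n) →L[ℝ] EuclideanSpace ℝ (Fin m)) (hB : Tendsto B L (𝓝 A))
    (lam : ι → EuclideanSpace ℝ (Fin m)) (hlam : ∀ᶠ i in L, lam i ∈ Q)
    (hv : Tendsto (fun i => ContinuousLinearMap.adjoint (B i) (lam i)) L
      (𝓝 (ContinuousLinearMap.adjoint A lambar))) :
    Tendsto lam L (𝓝 lambar) := by
  obtain ⟨C, hC, hCb⟩ := aux_mult Q A lambar hStrict
  have hBn : Tendsto (fun i => ‖B i - A‖) L (𝓝 0) := tendsto_iff_norm_sub_tendsto_zero.1 hB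
  have hvn := tendsto_iff_norm_sub_tendsto_zero.1 hv
  rw [tendsto_iff_norm_sub_tendsto_zero]
  have hup : Tendsto (fun i => 2 * C * (‖ContinuousLinearMap.adjoint (B i) (lam i)
      - ContinuousLinearMap.adjoint A lambar‖ + ‖B i - A‖ * ‖lambar‖)) L (𝓝 0) := by
    simpa using (hvn.add (hBn.mul_const ‖lambar‖)).const_mul (2 * C)
  refine squeeze_zero' (Eventually.of_forall fun i => norm_nonneg _) ?_ hup
  have hsmall : ∀ᶠ i in L, ‖B i - A‖ < 1 / (2 * C) := hBn.eventually (gt_mem_nhds (by positivity))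
  filter_upwards [hlam, hsmall] with i hi hs
  have h1 := hCb _ hi
  have h2 : ContinuousLinearMap.adjoint A (lam i - lambar) =
      (ContinuousLinearMap.adjoint (B i) (lam i) - ContinuousLinearMap.adjoint A lambar)
      - ContinuousLinearMap.adjoint (B i - A) (lam i) := by
    simp [map_sub]
  have h3 : ‖ContinuousLinearMap.adjoint (B i - A) (lam i)‖ ≤ ‖B i - A‖ * ‖lam i‖ := by
    refine (ContinuousLinearMap.le_opNorm _ _).trans_eq ?_
    rw [LinearIsometryEquiv.norm_map]
  have h4 : ‖lam i‖ ≤ ‖lam i - lambar‖ + ‖lambar‖ := norm_le_norm_sub_add _ _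
  have h5 := norm_sub_le (ContinuousLinearMap.adjoint (B i) (lam i) -
    ContinuousLinearMap.adjoint A lambar) (ContinuousLinearMap.adjoint (B i - A) (lam i))
  rw [← h2] at h5
  set a := ‖ContinuousLinearMap.adjoint (B i) (lam i) - ContinuousLinearMap.adjoint A lambar‖
  have h6 : ‖B i - A‖ * ‖lam i‖ ≤ ‖B i - A‖ * (‖lam i - lambar‖ + ‖lambar‖) := by gcongr
  have h7 : ‖lam i - lambar‖ ≤ C * (a + ‖B i - A‖ * (‖lam i - lambar‖ + ‖lambar‖)) :=
    h1.trans (mul_le_mul_of_nonneg_left (by linarith) hC.le)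
  have h8 : C * ‖B i - A‖ ≤ 1 / 2 := by
    rw [lt_div_iff₀ (by positivity)] at hs
    linarith
  have h9 := mul_le_mul_of_nonneg_right h8 (norm_nonneg (lam i - lambar))
  nlinarith

lemma aux_ereal (c : ℝ) (hc : 0 < c) (X : EReal) (s a b : ℝ) :
    (c : EReal) * (X - s - b) = c * (X - s - a) + ((c * (a - b) : ℝ) : EReal) := by
  induction X with
  | bot => simp [EReal.coe_mul_bot_of_pos hc]
  | top =>
    generalize c * (a - b) = r
    simp [EReal.coe_mul_top_of_pos hc]
  | coe x => norm_cast; ring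

set_option maxHeartbeats 1000000 in
theorem stmt6 {n m : ℕ} (Q : Set (EuclideanSpace ℝ (Fin m)))
    (hQne : Q.Nonempty) (hQc : IsClosed Q) (hQconv : Convex ℝ Q)
    (U : Set (EuclideanSpace ℝ (Fin n))) (hU : IsOpen U)
    (xbar : EuclideanSpace ℝ (Fin n)) (hxbar : xbar ∈ U)
    (F : EuclideanSpace ℝ (Fin n) → EuclideanSpace ℝ (Fin m))
    (F' : EuclideanSpace ℝ (Fin n) → (EuclideanSpace ℝ (Fin n) →L[ℝ] EuclideanSpace ℝ (Fin m)))
    (F'' : EuclideanSpace ℝ (Fin n) →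
      (EuclideanSpace ℝ (Fin n) →L[ℝ] EuclideanSpace ℝ (Fin n) →L[ℝ] EuclideanSpace ℝ (Fin m)))
    (hF' : ∀ x ∈ U, HasFDerivAt F (F' x) x)
    (hF'' : ∀ x ∈ U, HasFDerivAt F' (F'' x) x)
    (hF''cont : ContinuousOn F'' U)
    (hF0 : F xbar = 0)
    (lambar : EuclideanSpace ℝ (Fin m)) (hlambar : lambar ∈ Q)
    (hRob : (0 : EuclideanSpace ℝ (Fin m)) ∈
      interior {z | ∃ h : EuclideanSpace ℝ (Fin n), ∃ y : EuclideanSpace ℝ (Fin m),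
        supportFn Q y ≠ ⊤ ∧ z = F' xbar h - y})
    (hStrict : {z | ∃ h : EuclideanSpace ℝ (Fin n), ∃ v ∈ normalCone Q lambar,
        z = F' xbar h - v} = Set.univ) :
    ∀ h : EuclideanSpace ℝ (Fin n),
      strictD2phi Q F F' xbar (ContinuousLinearMap.adjoint (F' xbar) lambar) h ≥
        strictD2supp Q lambar (F' xbar h) + ((⟪lambar, F'' xbar h h⟫_ℝ : ℝ) : EReal) := by
  intro h
  unfold strictD2phi strictD2supp
  obtain ⟨vbar, hvbar⟩ : ∃ v, v = ContinuousLinearMap.adjoint (F' xbar) lambar := ⟨_, rfl⟩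
  rw [← hvbar]
  set S := {p : ℝ × EuclideanSpace ℝ (Fin n) × EuclideanSpace ℝ (Fin n) × EuclideanSpace ℝ (Fin n) |
          ∃ lam ∈ Q, p.2.2.2 = ContinuousLinearMap.adjoint (F' p.2.2.1) lam ∧
            supportFn Q (F p.2.2.1) = ((⟪lam, F p.2.2.1⟫_ℝ : ℝ) : EReal)} with hS
  set L := (((𝓝[>] (0 : ℝ)) ×ˢ (𝓝 h ×ˢ (𝓝 xbar ×ˢ 𝓝 vbar))) ⊓ Filter.principal S) with hL
  have hLS : ∀ᶠ p in L, p ∈ S := by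
    have : L ≤ Filter.principal S := inf_le_right
    exact this (mem_principal_self S)
  have hLle : L ≤ ((𝓝[>] (0 : ℝ)) ×ˢ (𝓝 h ×ˢ (𝓝 xbar ×ˢ 𝓝 vbar))) := inf_le_left
  have tt : Tendsto (fun p : ℝ × EuclideanSpace ℝ (Fin n) × EuclideanSpace ℝ (Fin n) ×
      EuclideanSpace ℝ (Fin n) => p.1) L (𝓝[>] 0) := tendsto_fst.mono_left hLle
  have th : Tendsto (fun p : ℝ × EuclideanSpace ℝ (Fin n) × EuclideanSpace ℝ (Fin n) ×
      EuclideanSpace ℝ (Fin n) => p.2.1) L (𝓝 h) :=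
    (tendsto_fst.comp tendsto_snd).mono_left hLle
  have tx : Tendsto (fun p : ℝ × EuclideanSpace ℝ (Fin n) × EuclideanSpace ℝ (Fin n) ×
      EuclideanSpace ℝ (Fin n) => p.2.2.1) L (𝓝 xbar) :=
    (tendsto_fst.comp (tendsto_snd.comp tendsto_snd)).mono_left hLle
  have tv : Tendsto (fun p : ℝ × EuclideanSpace ℝ (Fin n) × EuclideanSpace ℝ (Fin n) ×
      EuclideanSpace ℝ (Fin n) => p.2.2.2) L (𝓝 vbar) :=
    (tendsto_snd.comp (tendsto_snd.comp tendsto_snd)).mono_left hLle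
  have tt0 := tt.mono_right nhdsWithin_le_nhds
  have tpos : ∀ᶠ p in L, 0 < p.1 := tt.eventually self_mem_nhdsWithin
  have hFc : ContinuousAt F xbar := (hF' xbar hxbar).continuousAt
  have hF'c : ContinuousAt F' xbar := (hF'' xbar hxbar).continuousAt
  have tF : Tendsto (fun p : ℝ × EuclideanSpace ℝ (Fin n) × EuclideanSpace ℝ (Fin n) ×
      EuclideanSpace ℝ (Fin n) => F p.2.2.1) L (𝓝 0) := by
    rw [← hF0]; exact hFc.tendsto.comp tx
  have tF' : Tendsto (fun p : ℝ × EuclideanSpace ℝ (Fin n) × EuclideanSpace ℝ (Fin n) ×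
      EuclideanSpace ℝ (Fin n) => F' p.2.2.1) L (𝓝 (F' xbar)) := hF'c.tendsto.comp tx
  -- multipliers
  have hex : ∃ lam : ℝ × EuclideanSpace ℝ (Fin n) × EuclideanSpace ℝ (Fin n) ×
      EuclideanSpace ℝ (Fin n) → EuclideanSpace ℝ (Fin m), ∀ p ∈ S, lam p ∈ Q ∧
        p.2.2.2 = ContinuousLinearMap.adjoint (F' p.2.2.1) (lam p) ∧
            supportFn Q (F p.2.2.1) = ((⟪lam p, F p.2.2.1⟫_ℝ : ℝ) : EReal) := by
    have : ∀ p, ∃ l : EuclideanSpace ℝ (Fin m), p ∈ S → l ∈ Q ∧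
        p.2.2.2 = ContinuousLinearMap.adjoint (F' p.2.2.1) l ∧
            supportFn Q (F p.2.2.1) = ((⟪l, F p.2.2.1⟫_ℝ : ℝ) : EReal) := by
      intro p
      by_cases hp : p ∈ S
      · obtain ⟨l, h1, h2⟩ := hp
        exact ⟨l, fun _ => ⟨h1, h2⟩⟩
      · exact ⟨0, fun h => absurd h hp⟩
    choose l hl using this
    exact ⟨l, hl⟩
  obtain ⟨lam, hlam⟩ := hex
  have tlam : Tendsto lam L (𝓝 lambar) := by
    refine aux_lam_tendsto L Q (F' xbar) lambar hStrict (fun p => F' p.2.2.1) tF' lam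
      (hLS.mono fun p hp => (hlam p hp).1) ?_
    rw [← hvbar]
    refine tv.congr' ?_
    filter_upwards [hLS] with p hp using (hlam p hp).2.1
  -- Taylor remainder
  obtain ⟨R, hR⟩ : ∃ R, R = fun p : ℝ × EuclideanSpace ℝ (Fin n) × EuclideanSpace ℝ (Fin n) ×
      EuclideanSpace ℝ (Fin n) =>
    (2 / p.1 ^ 2) • (F (p.2.2.1 + p.1 • p.2.1) - F p.2.2.1 - p.1 • F' p.2.2.1 p.2.1) := ⟨_, rfl⟩
  have tR : Tendsto R L (𝓝 (F'' xbar h h)) := by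
    rw [hR]
    exact aux_taylor_comp U hU xbar hxbar F F' F'' hF' hF'' hF''cont h L (fun p => p.1)
      (fun p => p.2.1) (fun p => p.2.2.1) tt th tx
  obtain ⟨w, hw⟩ : ∃ w, w = fun p : ℝ × EuclideanSpace ℝ (Fin n) × EuclideanSpace ℝ (Fin n) ×
      EuclideanSpace ℝ (Fin n) => F' p.2.2.1 p.2.1 + (p.1 / 2) • R p := ⟨_, rfl⟩
  have tw : Tendsto w L (𝓝 (F' xbar h)) := by
    rw [hw]
    have h1 := aux_apply L _ _ _ _ tF' th
    have h2 := (tt0.div_const 2).smul tR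
    simpa using h1.add h2
  have hwt : ∀ᶠ p in L, F p.2.2.1 + p.1 • w p = F (p.2.2.1 + p.1 • p.2.1) := by
    filter_upwards [tpos] with p hp
    simp only [hw, hR, smul_add, smul_smul]
    have : p.1 * (p.1 / 2 * (2 / p.1 ^ 2)) = 1 := by field_simp
    rw [← mul_assoc] at this
    rw [← mul_assoc, this, one_smul]
    abel
  obtain ⟨Gm, hGm⟩ : ∃ Gm, Gm = fun p : ℝ × EuclideanSpace ℝ (Fin n) × EuclideanSpace ℝ (Fin n) ×
      EuclideanSpace ℝ (Fin n) => (p.1, w p, F p.2.2.1, lam p) := ⟨_, rfl⟩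
  set L' := (((𝓝[>] (0 : ℝ)) ×ˢ (𝓝 (F' xbar h) ×ˢ (𝓝 (0 : EuclideanSpace ℝ (Fin m)) ×ˢ 𝓝 lambar))) ⊓
      Filter.principal
        {p : ℝ × EuclideanSpace ℝ (Fin m) × EuclideanSpace ℝ (Fin m) × EuclideanSpace ℝ (Fin m) |
          p.2.2.2 ∈ Q ∧ supportFn Q p.2.2.1 = ((⟪p.2.2.2, p.2.2.1⟫_ℝ : ℝ) : EReal)}) with hL'
  have tG : Tendsto Gm L L' := by
    rw [hGm, hL', tendsto_inf]
    refine ⟨tt.prodMk (tw.prodMk (tF.prodMk tlam)), ?_⟩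
    rw [tendsto_principal]
    filter_upwards [hLS] with p hp
    exact ⟨(hlam p hp).1, (hlam p hp).2.2⟩
  have tb : Tendsto (fun p => ((⟪lam p, R p⟫_ℝ : ℝ) : EReal)) L
      (𝓝 ((⟪lambar, F'' xbar h h⟫_ℝ : ℝ) : EReal)) :=
    (continuous_coe_real_ereal.tendsto _).comp (tlam.inner tR)
  rcases L.eq_or_neBot with hbot | hne
  · rw [hbot]; simp
  rw [ge_iff_le, ← tb.liminf_eq]
  have hcomp := Filter.liminf_le_liminf_of_le (u := fun p : ℝ × EuclideanSpace ℝ (Fin m) ×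
    EuclideanSpace ℝ (Fin m) × EuclideanSpace ℝ (Fin m) =>
      secondDQ (supportFn Q) p.2.2.1 p.2.2.2 p.1 p.2.1) tG
  rw [← Filter.liminf_comp] at hcomp
  refine (add_le_add_left hcomp _).trans ?_
  refine EReal.le_liminf_add.trans ?_
  refine (Filter.liminf_congr ?_).le
  filter_upwards [hLS, tpos, hwt] with p hp h0 hwp
  obtain ⟨h1, h2, h3⟩ := hlam p hp
  have hc : (0 : ℝ) < 2 / p.1 ^ 2 := by positivity
  simp only [Function.comp, Pi.add_apply, secondDQ, hGm]
  rw [hwp, h3, h2, ContinuousLinearMap.adjoint_inner_left,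
    aux_ereal _ hc _ _ (p.1 * ⟪lam p, w p⟫_ℝ) (p.1 * ⟪lam p, F' p.2.2.1 p.2.1⟫_ℝ)]
  congr 2
  simp only [hw, inner_add_right, inner_smul_right]
  field_simp
  ring

end
end

section
/- Let Q ⊆ ℝ^m be a nonempty closed convex set, let U be an open neighborhood of x̄ ∈ ℝⁿ, let F : U → ℝ^m be twice continuously differentiable with F(x̄) = 0, and let λ̄ ∈ Q. Assume Robinson's constraint qualification 0 ∈ int{DF(x̄)h − y : h ∈ ℝⁿ, y ∈ ℝ^m with σ_Q(y) < +∞} and the strict constraint qualification {DF(x̄)h − v : h ∈ ℝⁿ, v ∈ N_Q(λ̄)} = ℝ^m. Set φ(x) = σ_Q(F(x)) for x ∈ U. Then for every h ∈ ℝⁿ with DF(x̄)h ∈ aff(N_Q(λ̄)) one has d²_s φ(x̄ | DF(x̄)ᵀλ̄)(h) = ⟨λ̄, D²F(x̄)[h,h]⟩ and d²_s σ_Q(0|λ̄)(DF(x̄)h) = 0. -/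
open Filter Topology Set
open scoped InnerProductSpace

noncomputable section

theorem supp_ge {m : ℕ} {Q : Set (EuclideanSpace ℝ (Fin m))} {lam : EuclideanSpace ℝ (Fin m)}
    (hl : lam ∈ Q) (y : EuclideanSpace ℝ (Fin m)) :
    ((⟪lam, y⟫_ℝ : ℝ) : EReal) ≤ supportFn Q y :=
  le_iSup₂ (f := fun z (_ : z ∈ Q) => ((⟪z, y⟫_ℝ : ℝ) : EReal)) lam hl

theorem supp_eq {m : ℕ} {Q : Set (EuclideanSpace ℝ (Fin m))} {lam : EuclideanSpace ℝ (Fin m)}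
    (hl : lam ∈ Q) {y : EuclideanSpace ℝ (Fin m)} (hy : y ∈ normalCone Q lam) :
    supportFn Q y = ((⟪lam, y⟫_ℝ : ℝ) : EReal) := by
  apply le_antisymm _ (supp_ge hl y)
  refine iSup₂_le fun z hz => ?_
  have := hy z hz
  rw [inner_sub_right, real_inner_comm, real_inner_comm lam y] at this
  exact_mod_cast (by linarith : ⟪z, y⟫_ℝ ≤ ⟪lam, y⟫_ℝ)

theorem dq_eq {n : ℕ} {f : EuclideanSpace ℝ (Fin n) → EReal}
    {x v : EuclideanSpace ℝ (Fin n)} {t : ℝ} {h : EuclideanSpace ℝ (Fin n)} {a b : ℝ}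
    (ha : f (x + t • h) = a) (hb : f x = b) :
    secondDQ f x v t h = ((2 / t ^ 2 * (a - b - t * ⟪v, h⟫_ℝ) : ℝ) : EReal) := by
  unfold secondDQ
  rw [ha, hb, EReal.coe_mul (2 / t ^ 2), EReal.coe_sub, EReal.coe_sub]

theorem dq_ge {n : ℕ} {f : EuclideanSpace ℝ (Fin n) → EReal}
    {x v : EuclideanSpace ℝ (Fin n)} {t : ℝ} {h : EuclideanSpace ℝ (Fin n)} {a b : ℝ}
    (ha : (a : EReal) ≤ f (x + t • h)) (hb : f x = b) :
    ((2 / t ^ 2 * (a - b - t * ⟪v, h⟫_ℝ) : ℝ) : EReal) ≤ secondDQ f x v t h := by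
  unfold secondDQ
  rw [hb, EReal.coe_mul (2 / t ^ 2), EReal.coe_sub, EReal.coe_sub]
  apply mul_le_mul_of_nonneg_left
  · exact EReal.sub_le_sub (EReal.sub_le_sub ha le_rfl) le_rfl
  · exact_mod_cast (by positivity : (0:ℝ) ≤ 2 / t ^ 2)

theorem nc_zero {m : ℕ} {Q : Set (EuclideanSpace ℝ (Fin m))} {lam : EuclideanSpace ℝ (Fin m)} :
    (0 : EuclideanSpace ℝ (Fin m)) ∈ normalCone Q lam := by
  intro y _; simp

theorem nc_add {m : ℕ} {Q : Set (EuclideanSpace ℝ (Fin m))} {lam a b : EuclideanSpace ℝ (Fin m)}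
    (ha : a ∈ normalCone Q lam) (hb : b ∈ normalCone Q lam) : a + b ∈ normalCone Q lam := by
  intro y hy
  rw [inner_add_left]
  linarith [ha y hy, hb y hy]

theorem nc_smul {m : ℕ} {Q : Set (EuclideanSpace ℝ (Fin m))} {lam a : EuclideanSpace ℝ (Fin m)}
    (ha : a ∈ normalCone Q lam) {t : ℝ} (ht : 0 ≤ t) : t • a ∈ normalCone Q lam := by
  intro y hy
  rw [real_inner_smul_left]
  exact mul_nonpos_of_nonneg_of_nonpos ht (ha y hy)

theorem nc_convex {m : ℕ} {Q : Set (EuclideanSpace ℝ (Fin m))} {lam : EuclideanSpace ℝ (Fin m)} :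
    Convex ℝ (normalCone Q lam) := by
  intro x hx y hy a b ha hb _
  exact nc_add (nc_smul hx ha) (nc_smul hy hb)

/-- the affine hull as a submodule -/
def ncSpan {m : ℕ} (Q : Set (EuclideanSpace ℝ (Fin m))) (lam : EuclideanSpace ℝ (Fin m)) :
    Submodule ℝ (EuclideanSpace ℝ (Fin m)) := Submodule.span ℝ (normalCone Q lam)

theorem mem_aff {m : ℕ} {Q : Set (EuclideanSpace ℝ (Fin m))} {lam w : EuclideanSpace ℝ (Fin m)} :
    w ∈ affineSpan ℝ (normalCone Q lam) ↔ w ∈ ncSpan Q lam := by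
  unfold ncSpan
  have h2 := affineSpan_insert_zero (k := ℝ) (normalCone Q lam)
  rw [Set.insert_eq_of_mem nc_zero] at h2
  rw [← SetLike.mem_coe, h2]; rfl

theorem mem_ncSpan {m : ℕ} {Q : Set (EuclideanSpace ℝ (Fin m))} {lam w : EuclideanSpace ℝ (Fin m)}
    (hw : w ∈ ncSpan Q lam) : ∃ a ∈ normalCone Q lam, ∃ b ∈ normalCone Q lam, w = a - b := by
  unfold ncSpan at hw
  induction hw using Submodule.span_induction with
  | mem x hx => exact ⟨x, hx, 0, nc_zero, by simp⟩
  | zero => exact ⟨0, nc_zero, 0, nc_zero, by simp⟩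
  | add x y _ _ hx hy =>
    obtain ⟨a, ha, b, hb, rfl⟩ := hx
    obtain ⟨c, hc, d, hd, rfl⟩ := hy
    exact ⟨a + c, nc_add ha hc, b + d, nc_add hb hd, by abel⟩
  | smul t x _ hx =>
    obtain ⟨a, ha, b, hb, rfl⟩ := hx
    rcases le_total 0 t with ht | ht
    · exact ⟨t • a, nc_smul ha ht, t • b, nc_smul hb ht, smul_sub _ _ _⟩
    · refine ⟨(-t) • b, nc_smul hb (by linarith), (-t) • a, nc_smul ha (by linarith), ?_⟩
      module

theorem nc_ri {m : ℕ} (Q : Set (EuclideanSpace ℝ (Fin m))) (lam : EuclideanSpace ℝ (Fin m)) :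
    ∃ r ∈ normalCone Q lam, ∃ ε > 0, ∀ z ∈ ncSpan Q lam, ‖z - r‖ < ε → z ∈ normalCone Q lam := by
  obtain ⟨r, hr⟩ := Set.Nonempty.intrinsicInterior (nc_convex (Q := Q) (lam := lam)) ⟨0, nc_zero⟩
  have hr0 := intrinsicInterior_subset hr
  obtain ⟨y, hy, rfl⟩ := mem_intrinsicInterior.1 hr
  rw [mem_interior_iff_mem_nhds, Metric.mem_nhds_iff] at hy
  obtain ⟨ε, hε, hb⟩ := hy
  refine ⟨y, hr0, ε, hε, fun z hz hzr => ?_⟩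
  have : (⟨z, mem_aff.2 hz⟩ : affineSpan ℝ (normalCone Q lam)) ∈ Metric.ball y ε := by
    rw [Metric.mem_ball, Subtype.dist_eq, dist_eq_norm]; exact hzr
  exact hb this

theorem liminf_le_of_curve {α : Type*} {f : α → EReal} {l : Filter α} {g : ℝ → α} {L : EReal}
    (hg : Tendsto g (𝓝[>] 0) l) (hL : Tendsto (fun t => f (g t)) (𝓝[>] 0) (𝓝 L)) :
    liminf f l ≤ L := by
  rw [← hL.liminf_eq]
  exact liminf_le_liminf_of_le hg

theorem supp_part {m : ℕ} {Q : Set (EuclideanSpace ℝ (Fin m))} {lam w : EuclideanSpace ℝ (Fin m)}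
    (hl : lam ∈ Q) (hw : w ∈ ncSpan Q lam) : strictD2supp Q lam w = 0 := by
  unfold strictD2supp
  apply le_antisymm
  · obtain ⟨a, ha, b, hb, rfl⟩ := mem_ncSpan hw
    refine liminf_le_of_curve (g := fun t => (t, a - b, t • b, lam)) ?_ ?_
    · rw [tendsto_inf]
      constructor
      · refine tendsto_id.prodMk (tendsto_const_nhds.prodMk (Tendsto.prodMk ?_ tendsto_const_nhds))
        have : Tendsto (fun t : ℝ => t • b) (𝓝 0) (𝓝 ((0:ℝ) • b)) :=
          (continuous_id.smul continuous_const).tendsto 0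
        rw [zero_smul] at this
        exact this.mono_left nhdsWithin_le_nhds
      · rw [tendsto_principal]
        filter_upwards [self_mem_nhdsWithin] with t ht
        exact ⟨hl, supp_eq hl (nc_smul hb (le_of_lt ht))⟩
    · apply tendsto_const_nhds.congr'
      filter_upwards [self_mem_nhdsWithin] with t ht
      have h1 := supp_eq hl (nc_smul hb (le_of_lt ht))
      have h2 := supp_eq hl (nc_smul ha (le_of_lt ht))
      have e : t • a = t • b + t • (a - b) := by module
      rw [e] at h2
      rw [dq_eq h2 h1, inner_add_right, inner_smul_right _ (a - b)]
      simp
  · refine le_liminf_of_le (by isBoundedDefault) ?_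
    rw [eventually_inf_principal]
    refine Eventually.of_forall fun p hp => ?_
    refine le_trans (le_of_eq ?_) (dq_ge (supp_ge hp.1 _) hp.2)
    rw [inner_add_right, inner_smul_right]
    simp

theorem lam_bound {n m : ℕ} {Q : Set (EuclideanSpace ℝ (Fin m))}
    {lambar : EuclideanSpace ℝ (Fin m)}
    (A : EuclideanSpace ℝ (Fin n) →L[ℝ] EuclideanSpace ℝ (Fin m))
    (hS : ∀ z, ∃ h : EuclideanSpace ℝ (Fin n), ∃ v ∈ normalCone Q lambar, z = A h - v) :
    ∃ C > 0, ∀ lam ∈ Q, ‖lam - lambar‖ ≤ C * ‖ContinuousLinearMap.adjoint A (lam - lambar)‖ := by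
  choose H V hV hHV using hS
  let e : Fin m → EuclideanSpace ℝ (Fin m) := fun j => EuclideanSpace.single j (1:ℝ)
  refine ⟨1 + ∑ j, (‖H (e j)‖ + ‖H (-e j)‖), by positivity, fun lam hl => ?_⟩
  set d := lam - lambar with hd
  have key : ∀ z, -⟪z, d⟫_ℝ ≤ ‖H z‖ * ‖ContinuousLinearMap.adjoint A d‖ := by
    intro z
    have h1 : ⟪z, d⟫_ℝ = ⟪H z, ContinuousLinearMap.adjoint A d⟫_ℝ - ⟪V z, d⟫_ℝ := by
      conv_lhs => rw [hHV z]
      rw [inner_sub_left, ContinuousLinearMap.adjoint_inner_right]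
    have h2 := hV z lam hl
    have h3 := neg_le_of_abs_le (abs_real_inner_le_norm (H z) (ContinuousLinearMap.adjoint A d))
    rw [← hd] at h2
    linarith
  have hj : ∀ j, ‖d j‖ ≤ (‖H (e j)‖ + ‖H (-e j)‖) * ‖ContinuousLinearMap.adjoint A d‖ := by
    intro j
    have h1 := key (e j)
    have h2 := key (-e j)
    have h3 : ⟪e j, d⟫_ℝ = d j := by simp [e, EuclideanSpace.inner_single_left]
    rw [inner_neg_left] at h2
    rw [h3] at h1 h2
    have p1 : 0 ≤ ‖H (e j)‖ * ‖ContinuousLinearMap.adjoint A d‖ := by positivity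
    have p2 : 0 ≤ ‖H (-e j)‖ * ‖ContinuousLinearMap.adjoint A d‖ := by positivity
    rw [Real.norm_eq_abs, abs_le]
    constructor <;> nlinarith
  have hsum : ‖d‖ ≤ ∑ j, ‖d j‖ := by
    have := (EuclideanSpace.basisFun (Fin m) ℝ).sum_repr d
    conv_lhs => rw [← this]
    refine (norm_sum_le _ _).trans (Finset.sum_le_sum fun j _ => ?_)
    rw [norm_smul]; simp
  calc ‖d‖ ≤ ∑ j, ‖d j‖ := hsum
    _ ≤ ∑ j, (‖H (e j)‖ + ‖H (-e j)‖) * ‖ContinuousLinearMap.adjoint A d‖ :=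
      Finset.sum_le_sum fun j _ => hj j
    _ ≤ _ := by
      rw [← Finset.sum_mul, add_mul]
      have : 0 ≤ 1 * ‖ContinuousLinearMap.adjoint A d‖ := by positivity
      linarith

theorem taylor_lim {n m : ℕ} {U : Set (EuclideanSpace ℝ (Fin n))} (hU : IsOpen U)
    {xbar : EuclideanSpace ℝ (Fin n)} (hxbar : xbar ∈ U)
    {F : EuclideanSpace ℝ (Fin n) → EuclideanSpace ℝ (Fin m)}
    {F' : EuclideanSpace ℝ (Fin n) → (EuclideanSpace ℝ (Fin n) →L[ℝ] EuclideanSpace ℝ (Fin m))}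
    {B : EuclideanSpace ℝ (Fin n) →L[ℝ] EuclideanSpace ℝ (Fin n) →L[ℝ] EuclideanSpace ℝ (Fin m)}
    (hF' : ∀ x ∈ U, HasFDerivAt F (F' x) x)
    (hB : HasStrictFDerivAt F' B xbar) (h : EuclideanSpace ℝ (Fin n)) :
    Tendsto (fun p : ℝ × EuclideanSpace ℝ (Fin n) × EuclideanSpace ℝ (Fin n) =>
      (2 / p.1 ^ 2) • (F (p.2.2 + p.1 • p.2.1) - F p.2.2 - p.1 • F' p.2.2 p.2.1))
      (𝓝[>] (0:ℝ) ×ˢ (𝓝 h ×ˢ 𝓝 xbar)) (𝓝 (B h h)) := by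
  have hBc : Tendsto (fun p : ℝ × EuclideanSpace ℝ (Fin n) × EuclideanSpace ℝ (Fin n) =>
      B p.2.1 p.2.1) (𝓝[>] (0:ℝ) ×ˢ (𝓝 h ×ˢ 𝓝 xbar)) (𝓝 (B h h)) := by
    have hc : Continuous fun y : EuclideanSpace ℝ (Fin n) => B y y :=
      B.continuous.clm_apply continuous_id
    exact (hc.tendsto h).comp (tendsto_fst.comp tendsto_snd)
  rw [tendsto_iff_norm_sub_tendsto_zero] at hBc ⊢
  suffices H : Tendsto (fun p : ℝ × EuclideanSpace ℝ (Fin n) × EuclideanSpace ℝ (Fin n) =>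
      ‖(2 / p.1 ^ 2) • (F (p.2.2 + p.1 • p.2.1) - F p.2.2 - p.1 • F' p.2.2 p.2.1)
        - B p.2.1 p.2.1‖) (𝓝[>] (0:ℝ) ×ˢ (𝓝 h ×ˢ 𝓝 xbar)) (𝓝 0) by
    have := H.add hBc
    rw [add_zero] at this
    refine squeeze_zero (fun _ => norm_nonneg _) (fun p => ?_) this
    exact norm_sub_le_norm_sub_add_norm_sub _ _ _
  rw [Metric.tendsto_nhds]
  intro ε hε
  set M := ‖h‖ + 1 with hM
  have hMpos : 0 < M := by positivity
  have hlo := (hasStrictFDerivAt_iff_isLittleO.1 hB)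
  rw [Asymptotics.isLittleO_iff] at hlo
  have hδ : 0 < ε / (4 * M ^ 2) := by positivity
  have h1 := hlo hδ
  have h2 : ∀ᶠ p : EuclideanSpace ℝ (Fin n) × EuclideanSpace ℝ (Fin n) in 𝓝 (xbar, xbar),
      p.1 ∈ U := (continuous_fst.tendsto (xbar, xbar)).eventually (hU.mem_nhds hxbar)
  obtain ⟨ρ, hρ, hball⟩ := Metric.eventually_nhds_iff_ball.1 (h1.and h2)
  have hb : ∀ y ∈ Metric.ball xbar ρ, ∀ x ∈ Metric.ball xbar ρ,
      ‖F' y - F' x - B (y - x)‖ ≤ ε / (4 * M ^ 2) * ‖y - x‖ ∧ y ∈ U := by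
    intro y hy x hx
    refine hball (y, x) ?_
    rw [← ball_prod_same]
    exact ⟨hy, hx⟩
  have e1 : ∀ᶠ p : ℝ × EuclideanSpace ℝ (Fin n) × EuclideanSpace ℝ (Fin n) in
      (𝓝[>] (0:ℝ) ×ˢ (𝓝 h ×ˢ 𝓝 xbar)), 0 < p.1 :=
    tendsto_fst.eventually self_mem_nhdsWithin
  have e2 : ∀ᶠ p : ℝ × EuclideanSpace ℝ (Fin n) × EuclideanSpace ℝ (Fin n) in
      (𝓝[>] (0:ℝ) ×ˢ (𝓝 h ×ˢ 𝓝 xbar)), ‖p.2.1‖ < M := by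
    have : ∀ᶠ y in 𝓝 h, ‖y‖ < M := (continuous_norm.tendsto h).eventually_lt_const (by linarith)
    exact (tendsto_fst.comp tendsto_snd).eventually this
  have e3 : ∀ᶠ p : ℝ × EuclideanSpace ℝ (Fin n) × EuclideanSpace ℝ (Fin n) in
      (𝓝[>] (0:ℝ) ×ˢ (𝓝 h ×ˢ 𝓝 xbar)), p.2.2 ∈ Metric.ball xbar ρ :=
    (tendsto_snd.comp tendsto_snd).eventually (Metric.ball_mem_nhds _ hρ)
  have e4 : ∀ᶠ p : ℝ × EuclideanSpace ℝ (Fin n) × EuclideanSpace ℝ (Fin n) in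
      (𝓝[>] (0:ℝ) ×ˢ (𝓝 h ×ˢ 𝓝 xbar)), p.2.2 + p.1 • p.2.1 ∈ Metric.ball xbar ρ := by
    have hc : Continuous fun p : ℝ × EuclideanSpace ℝ (Fin n) × EuclideanSpace ℝ (Fin n) =>
      p.2.2 + p.1 • p.2.1 := by fun_prop
    have ht := hc.tendsto (0, h, xbar)
    simp only [zero_smul, add_zero] at ht
    rw [nhds_prod_eq, nhds_prod_eq] at ht
    exact (ht.mono_left (prod_mono_left _ nhdsWithin_le_nhds)).eventually
      (Metric.ball_mem_nhds _ hρ)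
  filter_upwards [e1, e2, e3, e4] with p hp1 hp2 hp3 hp4
  obtain ⟨t, k, x⟩ := p
  simp only at hp1 hp2 hp3 hp4 ⊢
  have hseg : ∀ s ∈ Icc (0:ℝ) 1, x + (s * t) • k ∈ Metric.ball xbar ρ := by
    intro s hs
    have := (convex_ball xbar ρ).add_smul_mem hp3 hp4 hs
    rwa [smul_smul] at this
  have hder : ∀ s ∈ Icc (0:ℝ) 1, HasDerivWithinAt
      (fun s : ℝ => F (x + (s * t) • k) - (s * t) • F' x k - (s ^ 2 * (t ^ 2 / 2)) • B k k)
      (F' (x + (s * t) • k) (t • k) - t • F' x k - (2 * s * (t ^ 2 / 2)) • B k k)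
      (Icc 0 1) s := by
    intro s hs
    have hU' := (hb _ (hseg s hs) x hp3).2
    have d0 : HasDerivAt (fun s : ℝ => s * t) t s := by
      simpa using (hasDerivAt_id s).mul_const t
    have d1 : HasDerivAt (fun s : ℝ => x + (s * t) • k) (t • k) s :=
      (d0.smul_const k).const_add x
    have d2 := (hF' _ hU').comp_hasDerivAt s d1
    have d3 := d0.smul_const (F' x k)
    have d4 : HasDerivAt (fun s : ℝ => s ^ 2 * (t ^ 2 / 2)) (2 * s * (t ^ 2 / 2)) s := by
      simpa using (hasDerivAt_pow 2 s).mul_const (t ^ 2 / 2)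
    exact ((d2.sub d3).sub (d4.smul_const (B k k))).hasDerivWithinAt
  have hbd : ∀ s ∈ Ico (0:ℝ) 1,
      ‖F' (x + (s * t) • k) (t • k) - t • F' x k - (2 * s * (t ^ 2 / 2)) • B k k‖
        ≤ t ^ 2 * (ε / 4) := by
    intro s hs
    have hq := (hb _ (hseg s ⟨hs.1, hs.2.le⟩) x hp3).1
    have e : F' (x + (s * t) • k) (t • k) - t • F' x k - (2 * s * (t ^ 2 / 2)) • B k k
        = (F' (x + (s * t) • k) - F' x - B (x + (s * t) • k - x)) (t • k) := by
      simp only [add_sub_cancel_left, map_smul, sub_apply,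
        smul_apply, smul_sub, smul_smul]
      congr 2
      ring
    rw [e]
    have hn : ‖x + (s * t) • k - x‖ ≤ t * M := by
      rw [add_sub_cancel_left, norm_smul, Real.norm_eq_abs, abs_of_nonneg (mul_nonneg hs.1 hp1.le)]
      have : s * t ≤ t := by nlinarith [hs.2]
      exact mul_le_mul this hp2.le (norm_nonneg _) hp1.le
    have hn2 : ‖t • k‖ ≤ t * M := by
      rw [norm_smul, Real.norm_eq_abs, abs_of_pos hp1]
      gcongr
    calc _ ≤ ‖F' (x + (s * t) • k) - F' x - B (x + (s * t) • k - x)‖ * ‖t • k‖ :=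
          ContinuousLinearMap.le_opNorm _ _
      _ ≤ (ε / (4 * M ^ 2) * (t * M)) * (t * M) := by
          gcongr
          exact hq.trans (by gcongr)
      _ = t ^ 2 * (ε / 4) := by field_simp
  have hfin := norm_image_sub_le_of_norm_deriv_le_segment_01' hder hbd
  rw [dist_zero_right, norm_norm]
  have e : (2 / t ^ 2) • (F (x + t • k) - F x - t • F' x k) - B k k
      = (2 / t ^ 2) • ((F (x + ((1:ℝ) * t) • k) - ((1:ℝ) * t) • F' x k
        - ((1:ℝ) ^ 2 * (t ^ 2 / 2)) • B k k)
        - (F (x + ((0:ℝ) * t) • k) - ((0:ℝ) * t) • F' x k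
        - ((0:ℝ) ^ 2 * (t ^ 2 / 2)) • B k k)) := by
    have : (2 / t ^ 2) • (t ^ 2 / 2) • B k k = B k k := by
      rw [smul_smul]
      have : 2 / t ^ 2 * (t ^ 2 / 2) = 1 := by field_simp
      rw [this, one_smul]
    conv_lhs => rw [← this]
    simp
    module
  rw [e, norm_smul, Real.norm_eq_abs, abs_of_pos (by positivity)]
  calc _ ≤ 2 / t ^ 2 * (t ^ 2 * (ε / 4)) := by gcongr
    _ = ε / 2 := by field_simp; norm_num
    _ < ε := by linarith

theorem curve_exists {n m : ℕ} {xbar : EuclideanSpace ℝ (Fin n)}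
    {F : EuclideanSpace ℝ (Fin n) → EuclideanSpace ℝ (Fin m)}
    {A : EuclideanSpace ℝ (Fin n) →L[ℝ] EuclideanSpace ℝ (Fin m)}
    (hF : HasStrictFDerivAt F A xbar) (hF0 : F xbar = 0)
    (L : Submodule ℝ (EuclideanSpace ℝ (Fin m)))
    (hS : ∀ z, ∃ h : EuclideanSpace ℝ (Fin n), ∃ v ∈ L, z = A h - v)
    {k : EuclideanSpace ℝ (Fin n)} (hk : A k ∈ L) :
    ∃ γ : ℝ → EuclideanSpace ℝ (Fin n), HasDerivAt γ k 0 ∧ γ 0 = xbar ∧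
      ∀ᶠ t in 𝓝 (0:ℝ), F (γ t) ∈ L := by
  let P : EuclideanSpace ℝ (Fin m) →L[ℝ] Lᗮ := Lᗮ.orthogonalProjectionOnto
  have hP : ∀ z, P z = 0 ↔ z ∈ L := by
    intro z
    rw [Submodule.orthogonalProjectionOnto_eq_zero_iff, Submodule.orthogonal_orthogonal]
  have hG : HasStrictFDerivAt (fun x => P (F x)) (P.comp A) xbar :=
    P.hasStrictFDerivAt.comp xbar hF
  have hr : (P.comp A).range = ⊤ := by
    rw [LinearMap.range_eq_top]
    intro y
    obtain ⟨h, v, hv, e⟩ := hS y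
    refine ⟨h, ?_⟩
    have h1 : P (A h) - P v = y := by
      rw [← map_sub, ← e]
      exact Submodule.orthogonalProjectionOnto_mem_subspace_eq_self y
    rw [(hP v).2 hv, sub_zero] at h1
    exact h1
  let k' : (P.comp A).ker := ⟨k, (hP _).2 hk⟩
  let g := HasStrictFDerivAt.implicitFunction (fun x => P (F x)) (P.comp A) hG hr
  have hz : P (F xbar) = 0 := by rw [hF0, map_zero]
  refine ⟨fun t => g (P (F xbar)) (t • k'), ?_, ?_, ?_⟩
  · have h1 := (hG.to_implicitFunction hr).hasFDerivAt
    have h2 : HasDerivAt (fun t : ℝ => t • k') k' 0 := by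
      have h3 := (hasDerivAt_id (0:ℝ)).smul_const k'
      rwa [one_smul] at h3
    rw [← zero_smul ℝ k'] at h1
    exact h1.comp_hasDerivAt (0:ℝ) h2
  · simp only [zero_smul]
    exact hG.implicitFunction_apply_image hr
  · have h1 := hG.map_implicitFunction_eq hr
    have h2 : Tendsto (fun t : ℝ => (P (F xbar), t • k')) (𝓝 0) (𝓝 (P (F xbar), 0)) := by
      have : Continuous (fun t : ℝ => (P (F xbar), t • k')) := by fun_prop
      have := this.tendsto 0
      rwa [zero_smul] at this
    filter_upwards [h2.eventually h1] with t ht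
    rw [← hP]
    exact ht.trans hz

theorem curve_cone {n m : ℕ} {xbar : EuclideanSpace ℝ (Fin n)}
    {F : EuclideanSpace ℝ (Fin n) → EuclideanSpace ℝ (Fin m)}
    {A : EuclideanSpace ℝ (Fin n) →L[ℝ] EuclideanSpace ℝ (Fin m)}
    (hF : HasStrictFDerivAt F A xbar) (hF0 : F xbar = 0)
    {Q : Set (EuclideanSpace ℝ (Fin m))} {lam : EuclideanSpace ℝ (Fin m)}
    (hS : ∀ z, ∃ h : EuclideanSpace ℝ (Fin n), ∃ v ∈ normalCone Q lam, z = A h - v)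
    {r : EuclideanSpace ℝ (Fin m)} {ε : ℝ} (hε : 0 < ε)
    (hr : ∀ z ∈ ncSpan Q lam, ‖z - r‖ < ε → z ∈ normalCone Q lam)
    (hr0 : r ∈ normalCone Q lam)
    {k : EuclideanSpace ℝ (Fin n)} (hk : A k - r ∈ normalCone Q lam) :
    ∃ γ : ℝ → EuclideanSpace ℝ (Fin n), HasDerivAt γ k 0 ∧ γ 0 = xbar ∧
      ∀ᶠ t in 𝓝[>] (0:ℝ), F (γ t) ∈ normalCone Q lam := by
  have hNL : ∀ z ∈ normalCone Q lam, z ∈ ncSpan Q lam := fun z hz => Submodule.subset_span hz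
  have hAk : A k ∈ ncSpan Q lam := by
    have := (ncSpan Q lam).add_mem (hNL _ hk) (hNL _ hr0)
    simpa using this
  obtain ⟨γ, hγ, hγ0, hγL⟩ := curve_exists hF hF0 (ncSpan Q lam)
    (fun z => by obtain ⟨h, v, hv, e⟩ := hS z; exact ⟨h, v, hNL v hv, e⟩) hAk
  refine ⟨γ, hγ, hγ0, ?_⟩
  have hd : HasDerivAt (fun t => F (γ t)) (A k) 0 := by
    have h1 := hF.hasFDerivAt
    rw [← hγ0] at h1
    exact h1.comp_hasDerivAt (0:ℝ) hγ
  have hs := hd.tendsto_slope_zero_right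
  simp only [zero_add, hγ0, hF0, sub_zero] at hs
  have hs2 := (tendsto_iff_norm_sub_tendsto_zero.1 hs).eventually_lt_const hε
  filter_upwards [hs2, nhdsWithin_le_nhds hγL, self_mem_nhdsWithin] with t h1 h2 h3
  have h3' : 0 < t := h3
  have h4 : t⁻¹ • F (γ t) - (A k - r) ∈ normalCone Q lam := by
    apply hr
    · exact (ncSpan Q lam).sub_mem ((ncSpan Q lam).smul_mem _ h2) (hNL _ hk)
    · have e : t⁻¹ • F (γ t) - (A k - r) - r = t⁻¹ • F (γ t) - A k := by abel
      rw [e]; exact h1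
  have h5 := nc_smul (nc_add h4 hk) h3'.le
  rwa [sub_add_cancel, smul_smul, mul_inv_cancel₀ h3'.ne', one_smul] at h5

theorem phi_upper {n m : ℕ} {Q : Set (EuclideanSpace ℝ (Fin m))}
    {U : Set (EuclideanSpace ℝ (Fin n))} (hU : IsOpen U)
    {xbar : EuclideanSpace ℝ (Fin n)} (hxbar : xbar ∈ U)
    {F : EuclideanSpace ℝ (Fin n) → EuclideanSpace ℝ (Fin m)}
    {F' : EuclideanSpace ℝ (Fin n) → (EuclideanSpace ℝ (Fin n) →L[ℝ] EuclideanSpace ℝ (Fin m))}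
    {B : EuclideanSpace ℝ (Fin n) →L[ℝ] EuclideanSpace ℝ (Fin n) →L[ℝ] EuclideanSpace ℝ (Fin m)}
    (hF' : ∀ x ∈ U, HasFDerivAt F (F' x) x)
    (hB : HasStrictFDerivAt F' B xbar)
    (hF0 : F xbar = 0)
    {lambar : EuclideanSpace ℝ (Fin m)} (hl : lambar ∈ Q)
    (hS : ∀ z, ∃ h : EuclideanSpace ℝ (Fin n), ∃ v ∈ normalCone Q lambar, z = F' xbar h - v)
    {h : EuclideanSpace ℝ (Fin n)} (hh : F' xbar h ∈ ncSpan Q lambar) :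
    strictD2phi Q F F' xbar (ContinuousLinearMap.adjoint (F' xbar) lambar) h ≤
      ((⟪lambar, B h h⟫_ℝ : ℝ) : EReal) := by
  have hstr : HasStrictFDerivAt F (F' xbar) xbar :=
    hasStrictFDerivAt_of_hasFDerivAt_of_continuousAt
      (by filter_upwards [hU.mem_nhds hxbar] with y hy using hF' y hy) hB.continuousAt
  obtain ⟨a, ha, b, hb, hab⟩ := mem_ncSpan hh
  obtain ⟨r, hr0, ε, hε, hr⟩ := nc_ri Q lambar
  obtain ⟨k, v, hv, hk⟩ := hS (b + r)
  have hk1 : F' xbar k - r ∈ normalCone Q lambar := by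
    have e : F' xbar k - r = b + v := by
      have : F' xbar k = b + r + v := by rw [hk]; abel
      rw [this]; abel
    rw [e]; exact nc_add hb hv
  have hk2 : F' xbar (k + h) - r ∈ normalCone Q lambar := by
    have e : F' xbar (k + h) - r = a + v := by
      have : F' xbar k = b + r + v := by rw [hk]; abel
      rw [map_add, hab, this]; abel
    rw [e]; exact nc_add ha hv
  obtain ⟨γ, hγ, hγ0, hγN⟩ := curve_cone hstr hF0 hS hε hr hr0 hk1
  obtain ⟨η, hη, hη0, hηN⟩ := curve_cone hstr hF0 hS hε hr hr0 hk2
  have hγc : Tendsto γ (𝓝[>] 0) (𝓝 xbar) := by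
    have := hγ.continuousAt.tendsto
    rw [hγ0] at this
    exact this.mono_left nhdsWithin_le_nhds
  have hq : Tendsto (fun t : ℝ => t⁻¹ • (η t - γ t)) (𝓝[>] 0) (𝓝 h) := by
    have := (hη.sub hγ).tendsto_slope_zero_right
    simpa [hη0, hγ0] using this
  have hmain : Tendsto (fun t : ℝ => (t, t⁻¹ • (η t - γ t), γ t)) (𝓝[>] 0)
      (𝓝[>] (0:ℝ) ×ˢ (𝓝 h ×ˢ 𝓝 xbar)) := tendsto_id.prodMk (hq.prodMk hγc)
  have hT := (taylor_lim hU hxbar hF' hB h).comp hmain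
  have hI : Tendsto (fun y : EuclideanSpace ℝ (Fin m) => ((⟪lambar, y⟫_ℝ : ℝ) : EReal))
      (𝓝 (B h h)) (𝓝 ((⟪lambar, B h h⟫_ℝ : ℝ) : EReal)) :=
    (continuous_coe_real_ereal.comp (continuous_const.inner continuous_id)).tendsto _
  have hfin := hI.comp hT
  unfold strictD2phi
  refine liminf_le_of_curve (g := fun t => (t, t⁻¹ • (η t - γ t), γ t,
    ContinuousLinearMap.adjoint (F' (γ t)) lambar)) ?_ ?_
  · rw [tendsto_inf]
    constructor
    · refine tendsto_id.prodMk (hq.prodMk (hγc.prodMk ?_))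
      have hc : ContinuousAt (fun x => ContinuousLinearMap.adjoint (F' x) lambar) xbar := by
        have h1 : ContinuousAt (fun x => ContinuousLinearMap.adjoint (F' x)) xbar :=
          ContinuousAt.comp (ContinuousLinearMap.adjoint (𝕜 := ℝ)
            (E := EuclideanSpace ℝ (Fin n)) (F := EuclideanSpace ℝ (Fin m))).continuous.continuousAt
            hB.continuousAt
        exact h1.clm_apply continuousAt_const
      exact hc.tendsto.comp hγc
    · rw [tendsto_principal]
      filter_upwards [hγN] with t ht
      exact ⟨lambar, hl, rfl, supp_eq hl ht⟩
  · refine hfin.congr' ?_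
    filter_upwards [hγN, hηN, self_mem_nhdsWithin] with t h1 h2 h3
    have h3' : (0:ℝ) < t := h3
    have e : γ t + t • t⁻¹ • (η t - γ t) = η t := by
      rw [smul_smul, mul_inv_cancel₀ h3'.ne', one_smul]; abel
    have h2' := supp_eq hl h2
    rw [← e] at h2'
    rw [dq_eq (f := fun x => supportFn Q (F x)) h2' (supp_eq hl h1)]
    simp only [Function.comp]
    rw [ContinuousLinearMap.adjoint_inner_left, real_inner_smul_right, inner_sub_right,
      inner_sub_right, real_inner_smul_right]

theorem phi_lower {n m : ℕ} {Q : Set (EuclideanSpace ℝ (Fin m))}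
    {U : Set (EuclideanSpace ℝ (Fin n))} (hU : IsOpen U)
    {xbar : EuclideanSpace ℝ (Fin n)} (hxbar : xbar ∈ U)
    {F : EuclideanSpace ℝ (Fin n) → EuclideanSpace ℝ (Fin m)}
    {F' : EuclideanSpace ℝ (Fin n) → (EuclideanSpace ℝ (Fin n) →L[ℝ] EuclideanSpace ℝ (Fin m))}
    {B : EuclideanSpace ℝ (Fin n) →L[ℝ] EuclideanSpace ℝ (Fin n) →L[ℝ] EuclideanSpace ℝ (Fin m)}
    (hF' : ∀ x ∈ U, HasFDerivAt F (F' x) x)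
    (hB : HasStrictFDerivAt F' B xbar)
    {lambar : EuclideanSpace ℝ (Fin m)}
    (hS : ∀ z, ∃ h : EuclideanSpace ℝ (Fin n), ∃ v ∈ normalCone Q lambar, z = F' xbar h - v)
    {h : EuclideanSpace ℝ (Fin n)} :
    ((⟪lambar, B h h⟫_ℝ : ℝ) : EReal) ≤
      strictD2phi Q F F' xbar (ContinuousLinearMap.adjoint (F' xbar) lambar) h := by
  obtain ⟨C, hC, hbound⟩ := lam_bound (F' xbar) hS
  refine le_of_forall_lt fun c hc => ?_
  obtain ⟨c', hcc, hc'⟩ := exists_between hc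
  refine hcc.trans_le ?_
  unfold strictD2phi
  refine le_liminf_of_le (by isBoundedDefault) ?_
  rw [eventually_inf_principal]
  set vbar := ContinuousLinearMap.adjoint (F' xbar) lambar with hvbar
  have hI : ∀ᶠ q : EuclideanSpace ℝ (Fin m) × EuclideanSpace ℝ (Fin m) in 𝓝 (lambar, B h h),
      c' < ((⟪q.1, q.2⟫_ℝ : ℝ) : EReal) := by
    have hcont : Continuous fun q : EuclideanSpace ℝ (Fin m) × EuclideanSpace ℝ (Fin m) =>
        ((⟪q.1, q.2⟫_ℝ : ℝ) : EReal) :=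
      continuous_coe_real_ereal.comp (continuous_fst.inner continuous_snd)
    exact (hcont.tendsto (lambar, B h h)).eventually_const_lt hc'
  obtain ⟨δ, hδ, hball⟩ := Metric.eventually_nhds_iff_ball.1 hI
  set l := (𝓝[>] (0:ℝ)) ×ˢ (𝓝 h ×ˢ (𝓝 xbar ×ˢ 𝓝 vbar)) with hl
  have tx : Tendsto (fun p : ℝ × EuclideanSpace ℝ (Fin n) × EuclideanSpace ℝ (Fin n) ×
      EuclideanSpace ℝ (Fin n) => p.2.2.1) l (𝓝 xbar) :=
    tendsto_fst.comp (tendsto_snd.comp tendsto_snd)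
  have tv : Tendsto (fun p : ℝ × EuclideanSpace ℝ (Fin n) × EuclideanSpace ℝ (Fin n) ×
      EuclideanSpace ℝ (Fin n) => p.2.2.2) l (𝓝 vbar) :=
    tendsto_snd.comp (tendsto_snd.comp tendsto_snd)
  have th : Tendsto (fun p : ℝ × EuclideanSpace ℝ (Fin n) × EuclideanSpace ℝ (Fin n) ×
      EuclideanSpace ℝ (Fin n) => p.2.1) l (𝓝 h) :=
    tendsto_fst.comp tendsto_snd
  have hT := (taylor_lim hU hxbar hF' hB h).comp (tendsto_fst.prodMk (th.prodMk tx))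
  have e1 := hT.eventually (Metric.ball_mem_nhds _ hδ)
  have tF : Tendsto (fun p : ℝ × EuclideanSpace ℝ (Fin n) × EuclideanSpace ℝ (Fin n) ×
      EuclideanSpace ℝ (Fin n) => ‖F' p.2.2.1 - F' xbar‖) l (𝓝 0) :=
    tendsto_iff_norm_sub_tendsto_zero.1 (hB.continuousAt.tendsto.comp tx)
  have tw : Tendsto (fun p : ℝ × EuclideanSpace ℝ (Fin n) × EuclideanSpace ℝ (Fin n) ×
      EuclideanSpace ℝ (Fin n) => ‖p.2.2.2 - vbar‖) l (𝓝 0) :=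
    tendsto_iff_norm_sub_tendsto_zero.1 tv
  have e2 : ∀ᶠ p in l, C * ‖F' p.2.2.1 - F' xbar‖ < 1 / 2 := by
    have := tF.const_mul C
    rw [mul_zero] at this
    exact this.eventually_lt_const (by norm_num)
  have e3 : ∀ᶠ p in l, 2 * C * (‖p.2.2.2 - vbar‖ + ‖F' p.2.2.1 - F' xbar‖ * ‖lambar‖) < δ := by
    have := (tw.add (tF.mul_const ‖lambar‖)).const_mul (2 * C)
    simp only [zero_mul, add_zero, mul_zero] at this
    exact this.eventually_lt_const hδ
  filter_upwards [e1, e2, e3] with p h1 h2 h3 hp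
  obtain ⟨t, k, x, v⟩ := p
  obtain ⟨lam, hlQ, hv, hs⟩ := hp
  simp only [Function.comp] at h1 h2 h3 hv hs ⊢
  have hd : ‖lam - lambar‖ < δ := by
    refine lt_of_le_of_lt ?_ h3
    have hb1 := hbound lam hlQ
    have e : ContinuousLinearMap.adjoint (F' xbar) (lam - lambar)
        = (v - vbar) - ContinuousLinearMap.adjoint (F' x - F' xbar) lam := by
      rw [hv, hvbar, map_sub, map_sub, sub_apply]; abel
    have hb2 : ‖ContinuousLinearMap.adjoint (F' x - F' xbar) lam‖
        ≤ ‖F' x - F' xbar‖ * (‖lam - lambar‖ + ‖lambar‖) := by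
      refine (ContinuousLinearMap.le_opNorm _ _).trans ?_
      rw [LinearIsometryEquiv.norm_map]
      gcongr
      simpa using norm_add_le (lam - lambar) lambar
    have hb3 : ‖ContinuousLinearMap.adjoint (F' xbar) (lam - lambar)‖
        ≤ ‖v - vbar‖ + ‖F' x - F' xbar‖ * (‖lam - lambar‖ + ‖lambar‖) := by
      rw [e]
      exact (norm_sub_le _ _).trans (by gcongr)
    have hb4 := mul_le_mul_of_nonneg_left hb3 hC.le
    have hb5 := mul_le_mul_of_nonneg_right h2.le (norm_nonneg (lam - lambar))
    nlinarith
  have hfin := hball (lam, _) (by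
    rw [← ball_prod_same]
    exact ⟨by rw [Metric.mem_ball, dist_eq_norm]; exact hd, h1⟩)
  refine hfin.le.trans (le_trans (le_of_eq ?_)
    (dq_ge (f := fun x => supportFn Q (F x)) (supp_ge hlQ _) hs))
  rw [hv, ContinuousLinearMap.adjoint_inner_left, real_inner_smul_right, inner_sub_right,
    inner_sub_right, real_inner_smul_right]

theorem stmt7 {n m : ℕ} (Q : Set (EuclideanSpace ℝ (Fin m)))
    (hQne : Q.Nonempty) (hQc : IsClosed Q) (hQconv : Convex ℝ Q)
    (U : Set (EuclideanSpace ℝ (Fin n))) (hU : IsOpen U)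
    (xbar : EuclideanSpace ℝ (Fin n)) (hxbar : xbar ∈ U)
    (F : EuclideanSpace ℝ (Fin n) → EuclideanSpace ℝ (Fin m))
    (F' : EuclideanSpace ℝ (Fin n) → (EuclideanSpace ℝ (Fin n) →L[ℝ] EuclideanSpace ℝ (Fin m)))
    (F'' : EuclideanSpace ℝ (Fin n) →
      (EuclideanSpace ℝ (Fin n) →L[ℝ] EuclideanSpace ℝ (Fin n) →L[ℝ] EuclideanSpace ℝ (Fin m)))
    (hF' : ∀ x ∈ U, HasFDerivAt F (F' x) x)
    (hF'' : ∀ x ∈ U, HasFDerivAt F' (F'' x) x)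
    (hF''cont : ContinuousOn F'' U)
    (hF0 : F xbar = 0)
    (lambar : EuclideanSpace ℝ (Fin m)) (hlambar : lambar ∈ Q)
    (hRob : (0 : EuclideanSpace ℝ (Fin m)) ∈
      interior {z | ∃ h : EuclideanSpace ℝ (Fin n), ∃ y : EuclideanSpace ℝ (Fin m),
        supportFn Q y ≠ ⊤ ∧ z = F' xbar h - y})
    (hStrict : {z | ∃ h : EuclideanSpace ℝ (Fin n), ∃ v ∈ normalCone Q lambar,
        z = F' xbar h - v} = Set.univ) :
    ∀ h : EuclideanSpace ℝ (Fin n),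
      F' xbar h ∈ (affineSpan ℝ (normalCone Q lambar) : Set (EuclideanSpace ℝ (Fin m))) →
        strictD2phi Q F F' xbar (ContinuousLinearMap.adjoint (F' xbar) lambar) h =
            ((⟪lambar, F'' xbar h h⟫_ℝ : ℝ) : EReal) ∧
          strictD2supp Q lambar (F' xbar h) = 0 := by
  intro h hh
  have hh' := mem_aff.1 hh
  have hS : ∀ z, ∃ h : EuclideanSpace ℝ (Fin n), ∃ v ∈ normalCone Q lambar,
      z = F' xbar h - v := fun z => by
    have : z ∈ (Set.univ : Set (EuclideanSpace ℝ (Fin m))) := Set.mem_univ z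
    rwa [← hStrict] at this
  have hB : HasStrictFDerivAt F' (F'' xbar) xbar :=
    hasStrictFDerivAt_of_hasFDerivAt_of_continuousAt
      (by filter_upwards [hU.mem_nhds hxbar] with y hy using hF'' y hy)
      (hF''cont.continuousAt (hU.mem_nhds hxbar))
  exact ⟨le_antisymm (phi_upper hU hxbar hF' hB hF0 hlambar hS hh')
    (phi_lower hU hxbar hF' hB hS), supp_part hlambar hh'⟩


end
end

section
/- Let U₀ ⊆ ℝⁿ be open with x̄ ∈ U₀, let F : U₀ → ℝ^m be continuously differentiable with F(x̄) = 0, and let N ⊆ ℝ^m be a nonempty closed convex cone such that {DF(x̄)h − v : h ∈ ℝⁿ, v ∈ N} = ℝ^m. Then there exists a sequence x_k → x̄ such that F(x_k) ∈ ri(N) for all k and the sets (DF(x_k))⁻¹(aff N) converge to (DF(x̄))⁻¹(aff N) in the Painlevé–Kuratowski sense. -/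
open Filter Topology Set

/-- Painlevé–Kuratowski convergence of a sequence of sets to a limit set: every point of the
limit is a limit of a selection, and every cluster point of every selection lies in the limit. -/
def PKConv {E : Type*} [TopologicalSpace E] (S : ℕ → Set E) (L : Set E) : Prop :=
  (∀ x ∈ L, ∃ u : ℕ → E, (∀ k, u k ∈ S k) ∧ Tendsto u atTop (𝓝 x)) ∧
  (∀ u : ℕ → E, (∀ k, u k ∈ S k) → ∀ p, MapClusterPt p atTop u → p ∈ L)

theorem aux_ri {E : Type*} [NormedAddCommGroup E] [NormedSpace ℝ E] (N : Set E) (L : Submodule ℝ E)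
    (hL : (affineSpan ℝ N : Set E) = L) (y : E) :
    y ∈ intrinsicInterior ℝ N ↔ y ∈ L ∧ ∃ ε > 0, ∀ z ∈ L, dist z y < ε → z ∈ N := by
  have hL' : ∀ z, z ∈ affineSpan ℝ N ↔ z ∈ L := fun z => by
    rw [← SetLike.mem_coe, hL, SetLike.mem_coe]
  rw [mem_intrinsicInterior]
  constructor
  · rintro ⟨w, hw, rfl⟩
    refine ⟨(hL' _).1 w.2, ?_⟩
    rw [mem_interior_iff_mem_nhds, Metric.mem_nhds_iff] at hw
    obtain ⟨ε, hε, h⟩ := hw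
    exact ⟨ε, hε, fun z hz hd => h (show (⟨z, (hL' z).2 hz⟩ : affineSpan ℝ N) ∈ _ from hd)⟩
  · rintro ⟨hy, ε, hε, h⟩
    refine ⟨⟨y, (hL' y).2 hy⟩, ?_, rfl⟩
    rw [mem_interior_iff_mem_nhds, Metric.mem_nhds_iff]
    exact ⟨ε, hε, fun z hz => h z ((hL' _).1 z.2) hz⟩

theorem aux_app {ι E W : Type*} [NormedAddCommGroup E] [NormedSpace ℝ E] [NormedAddCommGroup W]
    [NormedSpace ℝ W] {l : Filter ι} {B : ι → E →L[ℝ] W} {B0 : E →L[ℝ] W} {u : ι → E} {p : E}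
    (hB : Tendsto B l (𝓝 B0)) (hu : Tendsto u l (𝓝 p)) :
    Tendsto (fun k => B k (u k)) l (𝓝 (B0 p)) :=
  ((isBoundedBilinearMap_apply (𝕜 := ℝ) (E := E) (F := W)).continuous.tendsto (B0, p)).comp
    (hB.prodMk_nhds hu)

theorem aux_pk {E W : Type*} [NormedAddCommGroup E] [NormedSpace ℝ E] [NormedAddCommGroup W]
    [NormedSpace ℝ W] [FiniteDimensional ℝ W] [CompleteSpace W]
    (B : ℕ → E →L[ℝ] W) (B0 : E →L[ℝ] W) (hB : Tendsto B atTop (𝓝 B0))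
    (hs : B0.range = ⊤) (S : ℕ → Set E) (S0 : Set E)
    (hS : ∀ k x, x ∈ S k ↔ B k x = 0) (hS0 : ∀ x, x ∈ S0 ↔ B0 x = 0) : PKConv S S0 := by
  classical
  constructor
  · intro x hx
    rw [hS0] at hx
    obtain ⟨R, hR⟩ := ContinuousLinearMap.exists_rightInverse_of_surjective B0 hs
    have h1 : Tendsto (fun k => (B k).comp R) atTop (𝓝 (1 : W →L[ℝ] W)) := by
      have : Tendsto (fun k => (B k).comp R) atTop (𝓝 (B0.comp R)) :=
        ((ContinuousLinearMap.compL ℝ W E W).flip R).continuous.tendsto _ |>.comp hB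
      rwa [hR] at this
    have h2 : Tendsto (fun k => Ring.inverse ((B k).comp R)) atTop (𝓝 (1 : W →L[ℝ] W)) := by
      have := (NormedRing.inverse_continuousAt (1 : (W →L[ℝ] W)ˣ)).tendsto
      rw [Units.val_one, Ring.inverse_one] at this
      exact this.comp h1
    have hu : ∀ᶠ k in atTop, IsUnit ((B k).comp R) :=
      h1.eventually (Units.isOpen.mem_nhds (show IsUnit (1 : W →L[ℝ] W) from isUnit_one))
    have h3 : Tendsto (fun k => B k x) atTop (𝓝 0) := by
      have : Tendsto (fun k => B k x) atTop (𝓝 (B0 x)) := aux_app hB tendsto_const_nhds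
      rwa [hx] at this
    let v : ℕ → E := fun k => x - R (Ring.inverse ((B k).comp R) (B k x))
    have hv : Tendsto v atTop (𝓝 x) := by
      have h4 := (R.continuous.tendsto _).comp (aux_app h2 h3)
      have h5 := (tendsto_const_nhds (x := x)).sub h4
      simpa using h5
    have hvk : ∀ᶠ k in atTop, v k ∈ S k := by
      filter_upwards [hu] with k hk
      rw [hS]
      have := congrArg (fun T : W →L[ℝ] W => T (B k x)) (Ring.mul_inverse_cancel _ hk)
      simp only [ContinuousLinearMap.mul_apply, ContinuousLinearMap.comp_apply,
        ContinuousLinearMap.one_apply] at this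
      simp only [v, map_sub, this, sub_self]
    refine ⟨fun k => if v k ∈ S k then v k else 0, fun k => ?_, ?_⟩
    · dsimp only
      split_ifs with h
      · exact h
      · rw [hS, map_zero]
    · refine hv.congr' ?_
      filter_upwards [hvk] with k hk
      rw [if_pos hk]
  · intro u hu p hp
    rw [mapClusterPt_iff_ultrafilter] at hp
    obtain ⟨U, hU, hp⟩ := hp
    rw [hS0]
    have h := aux_app (hB.mono_left hU) hp
    have h0 : (fun k => B k (u k)) = fun _ => 0 := funext fun k => (hS k _).1 (hu k)
    rw [h0] at h
    exact tendsto_nhds_unique h tendsto_const_nhds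

theorem aux_curve {E W : Type*} [NormedAddCommGroup E] [NormedSpace ℝ E] [CompleteSpace E]
    [NormedAddCommGroup W] [NormedSpace ℝ W] [FiniteDimensional ℝ W]
    (f : E → W) (f' : E →L[ℝ] W) (a : E) (hf : HasStrictFDerivAt f f' a) (hs : f'.range = ⊤)
    (h : E) (hh : f' h = 0) :
    ∃ γ : ℝ → E, γ 0 = a ∧ HasDerivAt γ h 0 ∧ ∀ᶠ t in 𝓝 (0 : ℝ), f (γ t) = f a := by
  let q : f'.ker := ⟨h, hh⟩
  let g := hf.implicitFunction f f' hs (f a)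
  have hg : HasStrictFDerivAt g f'.ker.subtypeL 0 := hf.to_implicitFunction hs
  have hl : HasDerivAt (fun t : ℝ => t • q) q 0 := by
    simpa using (hasDerivAt_id (0 : ℝ)).smul_const q
  have hc : Tendsto (fun t : ℝ => t • q) (𝓝 0) (𝓝 0) := by
    simpa using hl.continuousAt.tendsto
  refine ⟨fun t => g (t • q), ?_, ?_, ?_⟩
  · have := hf.implicitFunction_apply_image hs
    simpa [g] using this
  · have h0 : HasFDerivAt g f'.ker.subtypeL ((0 : ℝ) • q) := by
      rw [zero_smul]; exact hg.hasFDerivAt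
    exact h0.comp_hasDerivAt (0 : ℝ) hl
  · have := hf.map_implicitFunction_eq hs
    have h2 : Tendsto (fun t : ℝ => (f a, t • q)) (𝓝 0) (𝓝 (f a, 0)) :=
      tendsto_const_nhds.prodMk_nhds hc
    exact h2.eventually this

theorem stmt8 {n m : ℕ}
    (U₀ : Set (EuclideanSpace ℝ (Fin n))) (hU₀ : IsOpen U₀)
    (xbar : EuclideanSpace ℝ (Fin n)) (hxbar : xbar ∈ U₀)
    (F : EuclideanSpace ℝ (Fin n) → EuclideanSpace ℝ (Fin m))
    (F' : EuclideanSpace ℝ (Fin n) → (EuclideanSpace ℝ (Fin n) →L[ℝ] EuclideanSpace ℝ (Fin m)))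
    (hF' : ∀ x ∈ U₀, HasFDerivAt F (F' x) x)
    (hF'cont : ContinuousOn F' U₀)
    (hF0 : F xbar = 0)
    (N : Set (EuclideanSpace ℝ (Fin m)))
    (hNne : N.Nonempty) (hNc : IsClosed N) (hNconv : Convex ℝ N)
    (hNcone : ∀ c : ℝ, 0 ≤ c → ∀ x ∈ N, c • x ∈ N)
    (hCQ : {z | ∃ h, ∃ v ∈ N, z = F' xbar h - v} = Set.univ) :
    ∃ x : ℕ → EuclideanSpace ℝ (Fin n),
      Tendsto x atTop (𝓝 xbar) ∧
      (∀ k, F (x k) ∈ intrinsicInterior ℝ N) ∧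

      PKConv (fun k => F' (x k) ⁻¹' (affineSpan ℝ N : Set (EuclideanSpace ℝ (Fin m))))
        (F' xbar ⁻¹' (affineSpan ℝ N : Set (EuclideanSpace ℝ (Fin m)))) := by
  have h0N : (0 : EuclideanSpace ℝ (Fin m)) ∈ N := by
    obtain ⟨y, hy⟩ := hNne
    simpa using hNcone 0 le_rfl y hy
  have hadd : ∀ x ∈ N, ∀ y ∈ N, x + y ∈ N := by
    intro x hx y hy
    have h1 := hNcone 2 (by norm_num) _
      (hNconv hx hy (a := 1/2) (b := 1/2) (by norm_num) (by norm_num) (by norm_num))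
    rw [smul_add, smul_smul, smul_smul] at h1
    norm_num at h1
    exact h1
  set L : Submodule ℝ (EuclideanSpace ℝ (Fin m)) := Submodule.span ℝ N with hLdef
  have hL : (affineSpan ℝ N : Set (EuclideanSpace ℝ (Fin m))) = L := by
    have := affineSpan_insert_zero (k := ℝ) N
    rwa [Set.insert_eq_of_mem h0N] at this
  have hNL : ∀ x ∈ N, x ∈ L := fun x hx => Submodule.subset_span hx
  have hri := aux_ri N L hL
  let P : EuclideanSpace ℝ (Fin m) →L[ℝ] Lᗮ := Lᗮ.orthogonalProjectionOnto
  have hP : ∀ y, P y = 0 ↔ y ∈ L := by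
    intro y
    rw [Submodule.orthogonalProjectionOnto_eq_zero_iff, Submodule.orthogonal_orthogonal]
  have hsurj : (P.comp (F' xbar)).range = ⊤ := by
    rw [LinearMap.range_eq_top]
    intro w
    have hw : (w : EuclideanSpace ℝ (Fin m)) ∈ {z | ∃ h, ∃ v ∈ N, z = F' xbar h - v} := by
      rw [hCQ]; trivial
    obtain ⟨h, v, hv, hw⟩ := hw
    refine ⟨h, ?_⟩
    have h1 : P (w : EuclideanSpace ℝ (Fin m)) = w :=
      Submodule.orthogonalProjectionOnto_mem_subspace_eq_self w
    rw [hw, map_sub, (hP v).2 (hNL v hv), sub_zero] at h1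
    exact h1
  have hstrict : HasStrictFDerivAt F (F' xbar) xbar :=
    hasStrictFDerivAt_of_hasFDerivAt_of_continuousAt
      (Filter.eventually_of_mem (hU₀.mem_nhds hxbar) hF')
      (hF'cont.continuousAt (hU₀.mem_nhds hxbar))
  obtain ⟨hb, hhb⟩ : ∃ h, F' xbar h ∈ intrinsicInterior ℝ N := by
    obtain ⟨v0, hv0⟩ := Set.Nonempty.intrinsicInterior hNconv hNne
    have hw : v0 ∈ {z | ∃ h, ∃ v ∈ N, z = F' xbar h - v} := by
      rw [hCQ]; trivial
    obtain ⟨h, v, hv, hw⟩ := hw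
    refine ⟨h, ?_⟩
    have he : F' xbar h = v0 + v := by rw [hw]; abel
    rw [hri] at hv0 ⊢
    obtain ⟨h1, ε, hε, h2⟩ := hv0
    rw [he]
    refine ⟨L.add_mem h1 (hNL v hv), ε, hε, fun z hz hd => ?_⟩
    have := hadd _ (h2 (z - v) (L.sub_mem hz (hNL v hv)) (by
      rw [dist_eq_norm] at hd ⊢
      rwa [show z - v - v0 = z - (v0 + v) by abel])) v hv
    simpa using this
  obtain ⟨hbL, ε, hε, hball⟩ := (hri _).1 hhb
  obtain ⟨γ, hγ0, hγ, hγF⟩ := aux_curve (fun x => P (F x)) (P.comp (F' xbar)) xbar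
    (P.hasStrictFDerivAt.comp xbar hstrict) hsurj hb ((hP _).2 hbL)
  have hFγ : HasDerivAt (fun t => F (γ t)) (F' xbar hb) 0 := by
    have h1 : HasFDerivAt F (F' xbar) (γ 0) := by rw [hγ0]; exact hstrict.hasFDerivAt
    exact h1.comp_hasDerivAt (0 : ℝ) hγ
  have hslope : Tendsto (fun t : ℝ => t⁻¹ • F (γ t)) (𝓝[>] 0) (𝓝 (F' xbar hb)) := by
    have := hFγ.tendsto_slope_zero_right
    simpa [hγ0, hF0] using this
  have hev : ∀ᶠ t in 𝓝[>] (0 : ℝ), F (γ t) ∈ intrinsicInterior ℝ N := by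
    filter_upwards [hslope.eventually (Metric.ball_mem_nhds _ hε),
      hγF.filter_mono nhdsWithin_le_nhds, self_mem_nhdsWithin] with t h1 h2 h3
    have ht : 0 < t := h3
    have hFL : F (γ t) ∈ L := by
      rw [← hP, h2, hF0, map_zero]
    rw [hri]
    refine ⟨hFL, t * (ε - dist (t⁻¹ • F (γ t)) (F' xbar hb)),
      mul_pos ht (sub_pos.2 h1), fun z hz hd => ?_⟩
    have h4 : t⁻¹ • z ∈ N := by
      refine hball _ (L.smul_mem _ hz) ?_
      have h5 : dist (t⁻¹ • z) (t⁻¹ • F (γ t)) = t⁻¹ * dist z (F (γ t)) := by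
        rw [dist_smul₀, Real.norm_of_nonneg (inv_pos.2 ht).le]
      have h6 : t⁻¹ * dist z (F (γ t)) < ε - dist (t⁻¹ • F (γ t)) (F' xbar hb) := by
        rwa [inv_mul_lt_iff₀ ht]
      linarith [dist_triangle (t⁻¹ • z) (t⁻¹ • F (γ t)) (F' xbar hb)]
    have := hNcone t ht.le _ h4
    rwa [smul_smul, mul_inv_cancel₀ ht.ne', one_smul] at this
  obtain ⟨s, hs, hsri⟩ := Filter.exists_seq_forall_of_frequently hev.frequently
  have hx : Tendsto (fun k => γ (s k)) atTop (𝓝 xbar) := by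
    have := hγ.continuousAt.tendsto
    rw [hγ0] at this
    exact this.comp (hs.mono_right nhdsWithin_le_nhds)
  refine ⟨fun k => γ (s k), hx, hsri, ?_⟩
  refine aux_pk (fun k => P.comp (F' (γ (s k)))) (P.comp (F' xbar)) ?_ hsurj _ _ ?_ ?_
  · have h1 := (hF'cont.continuousAt (hU₀.mem_nhds hxbar)).tendsto.comp hx
    exact ((ContinuousLinearMap.compL ℝ (EuclideanSpace ℝ (Fin n)) (EuclideanSpace ℝ (Fin m))
      Lᗮ P).continuous.tendsto _).comp h1
  · intro k x
    rw [hL, Set.mem_preimage, SetLike.mem_coe, ContinuousLinearMap.comp_apply, hP]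
  · intro x
    rw [hL, Set.mem_preimage, SetLike.mem_coe, ContinuousLinearMap.comp_apply, hP]
end
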